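/- arXiv:2002.07925 — 2 statements merged into one kernel-verified Lean document; each statement's English description precedes it below -/
import Mathlib

section
/- If G is a 3-tree, then τ(G) ≤ (9/5)·ν(G) + 1/5. -/
open SimpleGraph

variable {V : Type*}

/-- A triangle transversal of `G`: a set of edges of `G` meeting every triangle of `G`
(so that its removal leaves a triangle-free graph). -/
def IsTriangleTransversal (G : SimpleGraph V) (X : Finset (Sym2 V)) : Prop :=
  ↑X ⊆ G.edgeSet ∧
    ∀ t : Finset V, G.IsNClique 3 t → ∃ e ∈ X, ∀ v ∈ e, v ∈ t

/-- A triangle packing of `G`: a set of pairwise edge-disjoint triangles of `G`. -/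
def IsTrianglePacking (G : SimpleGraph V) (Y : Finset (Finset V)) : Prop :=
  (∀ t ∈ Y, G.IsNClique 3 t) ∧
    ∀ s ∈ Y, ∀ t ∈ Y, s ≠ t →
      ∀ e ∈ G.edgeSet, ¬ ((∀ v ∈ e, v ∈ s) ∧ (∀ v ∈ e, v ∈ t))

/-- `tau G` is the minimum size of a triangle transversal of `G`. -/
noncomputable def tau (G : SimpleGraph V) : ℕ :=
  sInf {n | ∃ X : Finset (Sym2 V), IsTriangleTransversal G X ∧ X.card = n}

/-- `nu G` is the maximum size of a triangle packing of `G`. -/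
noncomputable def nu (G : SimpleGraph V) : ℕ :=
  sSup {n | ∃ Y : Finset (Finset V), IsTrianglePacking G Y ∧ Y.card = n}

/-- `G` is a 3-tree: it can be built from `K₃` by repeatedly adding a new vertex adjacent
to the three vertices of an existing triangle.  This is expressed via a construction
ordering `e : Fin (n+3) ≃ V`: the first three vertices form a triangle, and every later
vertex is adjacent, among earlier vertices, to exactly the vertices of a triangle. -/
def Is3Tree (G : SimpleGraph V) : Prop :=
  ∃ (n : ℕ) (e : Fin (n + 3) ≃ V),
    (∀ i j : Fin (n + 3), (i : ℕ) < 3 → (j : ℕ) < 3 → i ≠ j → G.Adj (e i) (e j)) ∧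
    ∀ j : Fin (n + 3), 3 ≤ (j : ℕ) →
      ∃ s : Finset V, G.IsNClique 3 s ∧
        (∀ v ∈ s, ∃ i : Fin (n + 3), (i : ℕ) < (j : ℕ) ∧ e i = v) ∧
        ∀ i : Fin (n + 3), (i : ℕ) < (j : ℕ) → (G.Adj (e j) (e i) ↔ e i ∈ s)

/-- The three sides of an oriented triangle `(a, b, c)`. -/
inductive Side
  | ab
  | bc
  | ac

/-- The worst-case behaviours of a part of a 3-tree hanging off a triangle. -/
inductive Gadget
  | none
  | any
  | one
  | without (e : Side)
  | sum (e : Side)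
  | through (e : Side)

namespace Gadget

/-- The list of all gadgets. -/
def all : List Gadget :=
  [none, any, one, without .ab, without .bc, without .ac, sum .ab, sum .bc, sum .ac,
    through .ab, through .bc, through .ac]

theorem mem_all (A : Gadget) : A ∈ all := by
  rcases A with _ | _ | _ | ⟨⟨⟩⟩ | ⟨⟨⟩⟩ | ⟨⟨⟩⟩ <;> simp [all]

/-- The number of further edges needed to destroy all triangles of a gadget, once the sides
`ab`, `bc`, `ac` marked by `x`, `y`, `z` have been deleted. -/
def cost : Gadget → Bool → Bool → Bool → ℕ
  | none, _, _, _ => 0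
  | any, x, y, z | sum _, x, y, z => 3 - (x.toNat + y.toNat + z.toNat)
  | _, x, y, z => bif x && y && z then 0 else bif x || y || z then 1 else 2

/-- The number of edge-disjoint triangles of a gadget that use only the sides marked by
`x`, `y`, `z`, relative to those that use no side. -/
def gain : Gadget → Bool → Bool → Bool → ℕ
  | none, _, _, _ => 0
  | any, x, y, z => min 2 (x.toNat + y.toNat + z.toNat)
  | one, x, y, z => (x || y || z).toNat
  | without .ab, _, y, z => (y || z).toNat
  | without .bc, x, _, z => (x || z).toNat
  | without .ac, x, y, _ => (x || y).toNat
  | sum .ab, _, y, z => y.toNat + z.toNat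
  | sum .bc, x, _, z => x.toNat + z.toNat
  | sum .ac, x, y, _ => x.toNat + y.toNat
  | through .ab, x, y, z => (x && (y || z)).toNat
  | through .bc, x, y, z => (y && (x || z)).toNat
  | through .ac, x, y, z => (z && (x || y)).toNat

/-- As `gain`, but the base triangle itself may also be used. -/
def closedGain (A : Gadget) (x y z : Bool) : ℕ :=
  max (A.gain x y z) (x && y && z).toNat

/-- The amount by which a gadget is better than the ratio `9 / 5`. -/
def credit : Gadget → ℕ
  | none | any | one => 0
  | without _ => 4
  | sum _ | through _ => 8

theorem cost_antitone (A : Gadget) {x y z x' y' z' : Bool} (hx : x ≤ x') (hy : y ≤ y')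
    (hz : z ≤ z') : A.cost x' y' z' ≤ A.cost x y z := by
  revert x y z x' y' z'
  rcases A with _ | _ | _ | ⟨⟨⟩⟩ | ⟨⟨⟩⟩ | ⟨⟨⟩⟩ <;> decide

theorem closedGain_monotone (A : Gadget) {x y z x' y' z' : Bool} (hx : x ≤ x') (hy : y ≤ y')
    (hz : z ≤ z') : A.closedGain x y z ≤ A.closedGain x' y' z' := by
  revert x y z x' y' z'
  rcases A with _ | _ | _ | ⟨⟨⟩⟩ | ⟨⟨⟩⟩ | ⟨⟨⟩⟩ <;> decide

/-- Gadgets `A`, `B`, `C` on the triangles `abv`, `bcv`, `acv` are destroyed at the cost of a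
gadget `R` on `abc` and `t` further edges; here `i`, `j`, `k` mark the deleted edges among
`av`, `bv`, `cv`. -/
abbrev AttachCost (A B C R : Gadget) (t : ℕ) : Prop :=
  ∀ x y z : Bool, ∃ i j k : Bool, (x || j || i) ∧ (y || k || j) ∧ (z || k || i) ∧
    i.toNat + j.toNat + k.toNat + A.cost x j i + B.cost y k j + C.cost z k i ≤
      R.cost x y z + t

/-- Gadgets `A`, `B`, `C` on the triangles `abv`, `bcv`, `acv` contain as many edge-disjoint
triangles as a gadget `R` on `abc`, and `p` more; here `i`, `j`, `k` describe which of the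
triangles receive the edges `av`, `bv`, `cv`. -/
abbrev AttachGain (A B C R : Gadget) (p : ℕ) : Prop :=
  ∀ x y z : Bool, ∃ i j k : Bool,
    R.gain x y z + p ≤
      A.closedGain x j i + B.closedGain y k (!j) + C.closedGain z (!k) (!i)

/-- Two gadgets `A`, `R` on the same triangle are destroyed at the cost of a single gadget `N`
and `t` further edges. -/
abbrev GlueCost (A R N : Gadget) (t : ℕ) : Prop :=
  ∀ x y z : Bool, ∃ x' y' z' : Bool,
    x'.toNat + y'.toNat + z'.toNat + A.cost (x || x') (y || y') (z || z') +
      R.cost (x || x') (y || y') (z || z') ≤ N.cost x y z + t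

/-- Two gadgets `A`, `R` on the same triangle contain as many edge-disjoint triangles as a
single gadget `N`. -/
abbrev GlueGain (A R N : Gadget) : Prop :=
  ∀ x y z : Bool, ∃ x' y' z' : Bool,
    N.closedGain x y z ≤
      A.closedGain (x && x') (y && y') (z && z') + R.gain (x && !x') (y && !y') (z && !z')

theorem exists_attach (A B C : Gadget) :
    ∃ (R : Gadget) (t p : ℕ), 5 * t + R.credit ≤ 9 * p + (A.credit + B.credit + C.credit) ∧
      AttachCost A B C R t ∧ AttachGain A B C R p := by
  have h : ∀ A ∈ all, ∀ B ∈ all, ∀ C ∈ all, ∃ R ∈ all, ∃ p ∈ [3, 2, 1, 0],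
      AttachGain A B C R p ∧ ∃ t ∈ [6, 5, 4, 3, 2, 1, 0],
        5 * t + R.credit ≤ 9 * p + (A.credit + B.credit + C.credit) ∧ AttachCost A B C R t := by
    decide +kernel
  obtain ⟨R, -, p, -, hp, t, -, hc, ht⟩ := h A (mem_all A) B (mem_all B) C (mem_all C)
  exact ⟨R, t, p, hc, ht, hp⟩

theorem exists_glue (A R : Gadget) :
    ∃ (N : Gadget) (t : ℕ), 5 * t + N.credit ≤ A.credit + R.credit ∧
      GlueCost A R N t ∧ GlueGain A R N := by
  have h : ∀ A ∈ all, ∀ R ∈ all, ∃ N ∈ all, GlueGain A R N ∧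
      ∃ t ∈ [3, 2, 1, 0], 5 * t + N.credit ≤ A.credit + R.credit ∧ GlueCost A R N t := by
    decide +kernel
  obtain ⟨N, -, hp, t, -, hc, ht⟩ := h A (mem_all A) R (mem_all R)
  exact ⟨N, t, hc, ht, hp⟩

theorem exists_final (A : Gadget) :
    ∃ x y z : Bool, (x || y || z) ∧
      5 * (x.toNat + y.toNat + z.toNat + A.cost x y z) ≤
        9 * A.closedGain true true true + A.credit + 1 := by
  rcases A with _ | _ | _ | ⟨⟨⟩⟩ | ⟨⟨⟩⟩ | ⟨⟨⟩⟩ <;> decide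

end Gadget

theorem decide_le_decide_of_imp {P Q : Prop} [Decidable P] [Decidable Q] (h : P → Q) :
    decide P ≤ decide Q := by
  by_cases hP : P
  · simp [hP, h hP]
  · simp [hP]

/-- The cost of a gadget placed on the oriented triangle `x`, once the edges in `F` are deleted. -/
def costAt [DecidableEq V] (F : Finset (Sym2 V)) (A : Gadget) (x : V × V × V) : ℕ :=
  A.cost (decide (s(x.1, x.2.1) ∈ F)) (decide (s(x.2.1, x.2.2) ∈ F)) (decide (s(x.1, x.2.2) ∈ F))

/-- The gain of a gadget placed on the oriented triangle `x`, if the sides of `x` that may be used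
are those mapped to `x` by `f`. -/
def gainAt [DecidableEq V] (f : Sym2 V → V × V × V) (A : Gadget) (x : V × V × V) : ℕ :=
  A.closedGain (decide (f s(x.1, x.2.1) = x)) (decide (f s(x.2.1, x.2.2) = x))
    (decide (f s(x.1, x.2.2) = x))

/-- The edge set `F` contains a side of the oriented triangle `x`. -/
def Hits (F : Finset (Sym2 V)) (x : V × V × V) : Prop :=
  s(x.1, x.2.1) ∈ F ∨ s(x.2.1, x.2.2) ∈ F ∨ s(x.1, x.2.2) ∈ F

theorem Hits.mono {F F' : Finset (Sym2 V)} (h : F ⊆ F') {x : V × V × V} (hx : Hits F x) :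
    Hits F' x :=
  hx.imp (@h _) (Or.imp (@h _) (@h _))

theorem costAt_anti [DecidableEq V] {F F' : Finset (Sym2 V)} (h : F ⊆ F') (A : Gadget) (x : V × V × V) :
    costAt F' A x ≤ costAt F A x :=
  A.cost_antitone (decide_le_decide_of_imp fun h' => h h') (decide_le_decide_of_imp fun h' => h h')
    (decide_le_decide_of_imp fun h' => h h')

/-- The gadgets `σ x` on the triangles `x ∈ L`, together with constants `t` and `p`, bound the
transversals and the packings of `G`. -/
structure GadgetBounds [DecidableEq V] (G : SimpleGraph V) (L : Finset (V × V × V)) (σ : V × V × V → Gadget)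
    (t p : ℕ) : Prop where
  exists_transversal : ∀ F : Finset (Sym2 V), ↑F ⊆ G.edgeSet → (∀ x ∈ L, Hits F x) →
    ∃ X, IsTriangleTransversal G X ∧ X.card ≤ F.card + ∑ x ∈ L, costAt F (σ x) x + t
  exists_packing : ∀ f : Sym2 V → V × V × V,
    ∃ Y, IsTrianglePacking G Y ∧ ∑ x ∈ L, gainAt f (σ x) x + p ≤ Y.card

/-- `IsStacked G W L` says that the subgraph of `G` on `W` is a 3-tree, and that `L` lists its
triangles, each with one orientation. -/
inductive IsStacked [DecidableEq V] (G : SimpleGraph V) : Finset V → Finset (V × V × V) → Prop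
  | base {a b c : V} (hab : G.Adj a b) (hbc : G.Adj b c) (hac : G.Adj a c) :
      IsStacked G {a, b, c} {(a, b, c)}
  | step {W : Finset V} {L : Finset (V × V × V)} {a b c v : V} (h : IsStacked G W L)
      (hL : (a, b, c) ∈ L) (hv : v ∉ W) (hadj : ∀ u ∈ W, G.Adj v u ↔ u = a ∨ u = b ∨ u = c) :
      IsStacked G (insert v W)
        (insert (a, b, v) (insert (b, c, v) (insert (a, c, v) L)))

/-- An optional edge. -/
def optEdge (i : Bool) (e : Sym2 V) : Finset (Sym2 V) := bif i then {e} else ∅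

theorem card_union_optEdge_le [DecidableEq V] {F : Finset (Sym2 V)} {n : ℕ} (h : F.card ≤ n)
    (i : Bool) (e : Sym2 V) : (F ∪ optEdge i e).card ≤ n + i.toNat := by
  refine (Finset.card_union_le _ _).trans (Nat.add_le_add h ?_)
  cases i <;> simp [optEdge]

theorem mem_optEdge {i : Bool} {e e' : Sym2 V} : e' ∈ optEdge i e ↔ i = true ∧ e' = e := by
  cases i <;> simp [optEdge]

namespace IsStacked

variable [DecidableEq V] {G : SimpleGraph V} {W : Finset V} {L : Finset (V × V × V)}

theorem mem_and_adj (h : IsStacked G W L) :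
    ∀ x ∈ L, (x.1 ∈ W ∧ x.2.1 ∈ W ∧ x.2.2 ∈ W) ∧
      G.Adj x.1 x.2.1 ∧ G.Adj x.2.1 x.2.2 ∧ G.Adj x.1 x.2.2 := by
  induction h with
  | base hab hbc hac => simp [hab, hbc, hac]
  | @step W L a b c v h hL hv hadj ih =>
    obtain ⟨⟨ha, hb, hc⟩, hab, hbc, hac⟩ := ih _ hL
    have hva := ((hadj a ha).2 (by simp)).symm
    have hvb := ((hadj b hb).2 (by simp)).symm
    have hvc := ((hadj c hc).2 (by simp)).symm
    intro x hx
    simp only [Finset.mem_insert] at hx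
    rcases hx with rfl | rfl | rfl | hx
    · simp_all
    · simp_all
    · simp_all
    · obtain ⟨⟨h1, h2, h3⟩, h4⟩ := ih x hx
      exact ⟨⟨Finset.mem_insert_of_mem h1, Finset.mem_insert_of_mem h2,
        Finset.mem_insert_of_mem h3⟩, h4⟩

theorem exists_triple (h : IsStacked G W L) :
    ∀ s : Finset V, G.IsNClique 3 s → s ⊆ W → ∃ x ∈ L, s = {x.1, x.2.1, x.2.2} := by
  induction h with
  | @base a b c hab hbc hac =>
    intro s hs hsW
    refine ⟨(a, b, c), by simp, Finset.eq_of_subset_of_card_le hsW ?_⟩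
    rw [hs.card_eq]
    exact Finset.card_le_three
  | @step W L a b c v h hL hv hadj ih =>
    intro s hs hsW
    by_cases hvs : v ∈ s
    · obtain ⟨p, q, r, hpq, hpr, hqr, rfl⟩ := is3Clique_iff.1 hs
      have key : ∀ p q : V, p ∈ insert v W → q ∈ insert v W → G.Adj p q → G.Adj v p →
          G.Adj v q → ({v, p, q} : Finset V) = {a, b, v} ∨ ({v, p, q} : Finset V) = {b, c, v} ∨
            ({v, p, q} : Finset V) = {a, c, v} := by
        intro p q hp hq hpq hvp hvq
        have hp' := (hadj p ((Finset.mem_insert.1 hp).resolve_left hvp.ne')).1 hvp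
        have hq' := (hadj q ((Finset.mem_insert.1 hq).resolve_left hvq.ne')).1 hvq
        have hne := hpq.ne
        rcases hp' with rfl | rfl | rfl <;> rcases hq' with rfl | rfl | rfl <;>
          first
          | exact absurd rfl hne
          | (left; ext; simp; tauto)
          | (right; left; ext; simp; tauto)
          | (right; right; ext; simp; tauto)
      have fin : ({p, q, r} : Finset V) = {a, b, v} ∨ ({p, q, r} : Finset V) = {b, c, v} ∨
            ({p, q, r} : Finset V) = {a, c, v} := by
        have hp := hsW (show p ∈ ({p, q, r} : Finset V) by simp)
        have hq := hsW (show q ∈ ({p, q, r} : Finset V) by simp)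
        have hr := hsW (show r ∈ ({p, q, r} : Finset V) by simp)
        simp only [Finset.mem_insert, Finset.mem_singleton] at hvs
        rcases hvs with rfl | rfl | rfl
        · exact key q r hq hr hqr hpq hpr
        · rw [Finset.insert_comm]
          exact key p r hp hr hpr hpq.symm hqr
        · rw [Finset.pair_comm, Finset.insert_comm]
          exact key p q hp hq hpq hpr.symm hqr.symm
      rcases fin with h | h | h
      · exact ⟨(a, b, v), by simp, h⟩
      · exact ⟨(b, c, v), by simp, h⟩
      · exact ⟨(a, c, v), by simp, h⟩
    · obtain ⟨x, hx, rfl⟩ := ih s hs fun u hu =>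
        (Finset.mem_insert.1 (hsW hu)).resolve_left fun h => hvs (h ▸ hu)
      exact ⟨x, by simp [hx], rfl⟩

end IsStacked

theorem sym2_eq_side {u w : V} {x : V × V × V} (huw : u ≠ w)
    (hu : u = x.1 ∨ u = x.2.1 ∨ u = x.2.2) (hw : w = x.1 ∨ w = x.2.1 ∨ w = x.2.2) :
    s(u, w) = s(x.1, x.2.1) ∨ s(u, w) = s(x.2.1, x.2.2) ∨ s(u, w) = s(x.1, x.2.2) := by
  rcases hu with rfl | rfl | rfl <;> rcases hw with rfl | rfl | rfl <;> simp_all [Sym2.eq_swap]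

theorem IsStacked.gadgetBounds_none [Fintype V] [DecidableEq V] {G : SimpleGraph V} {L : Finset (V × V × V)}
    (h : IsStacked G Finset.univ L) : GadgetBounds G L (fun _ => .none) 0 0 where
  exists_transversal F hF hL := by
    refine ⟨F, ⟨hF, fun s hs => ?_⟩, by omega⟩
    obtain ⟨x, hx, rfl⟩ := h.exists_triple s hs (Finset.subset_univ s)
    rcases hL x hx with h | h | h <;> exact ⟨_, h, by simp⟩
  exists_packing f := by
    set M := L.filter fun x =>
      f s(x.1, x.2.1) = x ∧ f s(x.2.1, x.2.2) = x ∧ f s(x.1, x.2.2) = x with hM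
    have owner : ∀ x ∈ M, ∀ u w : V, u ≠ w → u ∈ ({x.1, x.2.1, x.2.2} : Finset V) →
        w ∈ ({x.1, x.2.1, x.2.2} : Finset V) → f s(u, w) = x := by
      intro x hx u w huw hu hw
      obtain ⟨-, h1, h2, h3⟩ := Finset.mem_filter.1 hx
      rcases sym2_eq_side (x := x) huw (by simpa using hu) (by simpa using hw) with h | h | h <;>
        rw [h] <;> assumption
    refine ⟨M.image fun x => {x.1, x.2.1, x.2.2}, ⟨?_, ?_⟩, ?_⟩
    · simp only [Finset.mem_image]
      rintro _ ⟨x, hx, rfl⟩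
      obtain ⟨-, h1, h2, h3⟩ := h.mem_and_adj x (Finset.mem_filter.1 hx).1
      exact is3Clique_triple_iff.2 ⟨h1, h3, h2⟩
    · simp only [Finset.mem_image]
      rintro _ ⟨x, hx, rfl⟩ _ ⟨y, hy, rfl⟩ hxy e he
      induction e with
      | _ u w =>
        rintro ⟨hex, hey⟩
        have hne := G.ne_of_adj (G.mem_edgeSet.1 he)
        have h1 := owner x hx u w hne (hex u (by simp)) (hex w (by simp))
        have h2 := owner y hy u w hne (hey u (by simp)) (hey w (by simp))
        exact hxy (by rw [← h1, h2])
    · rw [Finset.card_image_of_injOn]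
      · rw [hM, Finset.card_filter, add_zero]
        refine le_of_eq (Finset.sum_congr rfl fun x _ => ?_)
        simp only [gainAt, Gadget.closedGain, Gadget.gain]
        by_cases h1 : f s(x.1, x.2.1) = x <;> by_cases h2 : f s(x.2.1, x.2.2) = x <;>
          by_cases h3 : f s(x.1, x.2.2) = x <;> simp [h1, h2, h3]
      · intro x hx y hy hxy
        have hne := (h.mem_and_adj x (Finset.mem_filter.1 hx).1).2.1.ne
        have h1 := owner x hx _ _ hne (by simp) (by simp)
        simp only at hxy
        have h2 := owner y hy _ _ hne (by rw [← hxy]; simp) (by rw [← hxy]; simp)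
        rw [← h1, h2]

theorem sum_insert_triples {M : Type*} [AddCommMonoid M] [DecidableEq V] {L : Finset (V × V × V)}
    {W : Finset V} {a b c v : V} (hW : ∀ x ∈ L, x.2.2 ∈ W) (hv : v ∉ W) (hab : a ≠ b)
    (hbc : b ≠ c) (g : V × V × V → M) :
    ∑ x ∈ insert (a, b, v) (insert (b, c, v) (insert (a, c, v) L)), g x =
      g (a, b, v) + (g (b, c, v) + (g (a, c, v) + ∑ x ∈ L, g x)) := by
  have hvL : ∀ p q : V, (p, q, v) ∉ L := fun p q h => hv (hW _ h)
  rw [Finset.sum_insert, Finset.sum_insert, Finset.sum_insert] <;>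
    simp [hvL, hab, hab.symm, hbc]

namespace GadgetBounds

variable [DecidableEq V] {G : SimpleGraph V} {W : Finset V} {L : Finset (V × V × V)}
  {a b c v : V} {σ : V × V × V → Gadget} {t p : ℕ} {R N : Gadget} {t₁ t₂ p₁ : ℕ}

theorem exists_transversal_step (hG : IsStacked G W L) (hL : (a, b, c) ∈ L) (hv : v ∉ W)
    (hadj : ∀ u ∈ W, G.Adj v u ↔ u = a ∨ u = b ∨ u = c)
    (h : GadgetBounds G (insert (a, b, v) (insert (b, c, v) (insert (a, c, v) L))) σ t p)
    (hR : Gadget.AttachCost (σ (a, b, v)) (σ (b, c, v)) (σ (a, c, v)) R t₁)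
    (hN : Gadget.GlueCost (σ (a, b, c)) R N t₂) (F : Finset (Sym2 V)) (hF : ↑F ⊆ G.edgeSet)
    (hit : ∀ x ∈ L, Hits F x) :
    ∃ X, IsTriangleTransversal G X ∧
      X.card ≤ F.card + ∑ x ∈ L, costAt F (Function.update σ (a, b, c) N x) x +
        (t + t₁ + t₂) := by
  obtain ⟨⟨ha, hb, hc⟩, hab, hbc, hac⟩ := hG.mem_and_adj _ hL
  dsimp only at ha hb hc hab hbc hac
  have hva := (hadj a ha).2 (by simp)
  have hvb := (hadj b hb).2 (by simp)
  have hvc := (hadj c hc).2 (by simp)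
  obtain ⟨x', y', z', hglue⟩ := hN (decide (s(a, b) ∈ F)) (decide (s(b, c) ∈ F))
    (decide (s(a, c) ∈ F))
  obtain ⟨i, j, k, hi, hj, hk, hatt⟩ := hR (decide (s(a, b) ∈ F) || x')
    (decide (s(b, c) ∈ F) || y') (decide (s(a, c) ∈ F) || z')
  set F' := F ∪ optEdge x' s(a, b) ∪ optEdge y' s(b, c) ∪ optEdge z' s(a, c) ∪
    optEdge i s(a, v) ∪ optEdge j s(b, v) ∪ optEdge k s(c, v) with hF'
  have hcard : F'.card ≤ F.card + x'.toNat + y'.toNat + z'.toNat + i.toNat + j.toNat +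
      k.toNat := by
    repeat refine card_union_optEdge_le ?_ _ _
    exact le_rfl
  have hsub : F ⊆ F' := fun e he => by simp [hF', he]
  have mab : ((decide (s(a, b) ∈ F)) || x') ≤ decide (s(a, b) ∈ F') := by
    simp only [Bool.le_iff_imp, Bool.or_eq_true, decide_eq_true_eq]
    rintro (h | h) <;> simp [hF', mem_optEdge, h]
  have mbc : ((decide (s(b, c) ∈ F)) || y') ≤ decide (s(b, c) ∈ F') := by
    simp only [Bool.le_iff_imp, Bool.or_eq_true, decide_eq_true_eq]
    rintro (h | h) <;> simp [hF', mem_optEdge, h]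
  have mac : ((decide (s(a, c) ∈ F)) || z') ≤ decide (s(a, c) ∈ F') := by
    simp only [Bool.le_iff_imp, Bool.or_eq_true, decide_eq_true_eq]
    rintro (h | h) <;> simp [hF', mem_optEdge, h]
  have mav : i ≤ decide (s(a, v) ∈ F') := by
    simp only [Bool.le_iff_imp, decide_eq_true_eq]
    intro h; simp [hF', mem_optEdge, h]
  have mbv : j ≤ decide (s(b, v) ∈ F') := by
    simp only [Bool.le_iff_imp, decide_eq_true_eq]
    intro h; simp [hF', mem_optEdge, h]
  have mcv : k ≤ decide (s(c, v) ∈ F') := by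
    simp only [Bool.le_iff_imp, decide_eq_true_eq]
    intro h; simp [hF', mem_optEdge, h]
  have hits : ∀ {x y z : Bool} {e₁ e₂ e₃ : Sym2 V}, x ≤ decide (e₁ ∈ F') →
      y ≤ decide (e₂ ∈ F') → z ≤ decide (e₃ ∈ F') → (x || y || z) = true →
      e₁ ∈ F' ∨ e₂ ∈ F' ∨ e₃ ∈ F' := by
    intro x y z e₁ e₂ e₃ h1 h2 h3 h
    simp only [Bool.le_iff_imp, decide_eq_true_eq, Bool.or_eq_true] at h1 h2 h3 h
    tauto
  have hedge : ↑F' ⊆ G.edgeSet := by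
    intro e he
    simp only [hF', Finset.coe_union, Set.mem_union, Finset.mem_coe, mem_optEdge] at he
    rcases he with (((((he | ⟨-, rfl⟩) | ⟨-, rfl⟩) | ⟨-, rfl⟩) | ⟨-, rfl⟩) | ⟨-, rfl⟩) | ⟨-, rfl⟩
    · exact hF he
    · exact hab
    · exact hbc
    · exact hac
    · exact hva.symm
    · exact hvb.symm
    · exact hvc.symm
  have hhit : ∀ x ∈ insert (a, b, v) (insert (b, c, v) (insert (a, c, v) L)), Hits F' x := by
    intro x hx
    simp only [Finset.mem_insert] at hx
    rcases hx with rfl | rfl | rfl | hx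
    · exact hits mab mbv mav hi
    · exact hits mbc mcv mbv hj
    · exact hits mac mcv mav hk
    · exact (hit x hx).mono hsub
  obtain ⟨X, hX, hXcard⟩ := h.exists_transversal F' hedge hhit
  refine ⟨X, hX, hXcard.trans ?_⟩
  rw [sum_insert_triples (fun x hx => (hG.mem_and_adj x hx).1.2.2) hv hab.ne hbc.ne,
    ← Finset.add_sum_erase L _ hL, ← Finset.add_sum_erase L _ hL]
  have h1 : costAt F' (σ (a, b, v)) (a, b, v) ≤ _ := Gadget.cost_antitone _ mab mbv mav
  have h2 : costAt F' (σ (b, c, v)) (b, c, v) ≤ _ := Gadget.cost_antitone _ mbc mcv mbv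
  have h3 : costAt F' (σ (a, c, v)) (a, c, v) ≤ _ := Gadget.cost_antitone _ mac mcv mav
  have h4 : costAt F' (σ (a, b, c)) (a, b, c) ≤ _ := Gadget.cost_antitone _ mab mbc mac
  have h5 : ∑ x ∈ L.erase (a, b, c), costAt F' (σ x) x ≤
      ∑ x ∈ L.erase (a, b, c), costAt F (Function.update σ (a, b, c) N x) x :=
    Finset.sum_le_sum fun x hx => by
      rw [Function.update_of_ne (Finset.ne_of_mem_erase hx)]
      exact costAt_anti hsub _ _
  have h6 : costAt F (Function.update σ (a, b, c) N (a, b, c)) (a, b, c) =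
      N.cost (decide (s(a, b) ∈ F)) (decide (s(b, c) ∈ F)) (decide (s(a, c) ∈ F)) := by
    rw [Function.update_self]; rfl
  omega

theorem exists_packing_step (hG : IsStacked G W L) (hL : (a, b, c) ∈ L) (hv : v ∉ W)
    (h : GadgetBounds G (insert (a, b, v) (insert (b, c, v) (insert (a, c, v) L))) σ t p)
    (hR : Gadget.AttachGain (σ (a, b, v)) (σ (b, c, v)) (σ (a, c, v)) R p₁)
    (hN : Gadget.GlueGain (σ (a, b, c)) R N) (f : Sym2 V → V × V × V) :
    ∃ Y, IsTrianglePacking G Y ∧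
      ∑ x ∈ L, gainAt f (Function.update σ (a, b, c) N x) x + (p + p₁) ≤ Y.card := by
  obtain ⟨⟨ha, hb, hc⟩, hab, hbc, hac⟩ := hG.mem_and_adj _ hL
  dsimp only at ha hb hc hab hbc hac
  have hva : a ≠ v := fun h => hv (h ▸ ha)
  have hvb : b ≠ v := fun h => hv (h ▸ hb)
  have hvc : c ≠ v := fun h => hv (h ▸ hc)
  have hab := hab.ne
  have hbc := hbc.ne
  have hac := hac.ne
  obtain ⟨x', y', z', hglue⟩ := hN (decide (f s(a, b) = (a, b, c)))
    (decide (f s(b, c) = (a, b, c))) (decide (f s(a, c) = (a, b, c)))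
  set x := decide (f s(a, b) = (a, b, c)) && !x' with hx
  set y := decide (f s(b, c) = (a, b, c)) && !y' with hy
  set z := decide (f s(a, c) = (a, b, c)) && !z' with hz
  obtain ⟨i, j, k, hatt⟩ := hR x y z
  set f' : Sym2 V → V × V × V := fun e =>
    if e = s(a, v) then bif i then (a, b, v) else (a, c, v)
    else if e = s(b, v) then bif j then (a, b, v) else (b, c, v)
    else if e = s(c, v) then bif k then (b, c, v) else (a, c, v)
    else if e = s(a, b) ∧ x then (a, b, v)
    else if e = s(b, c) ∧ y then (b, c, v)
    else if e = s(a, c) ∧ z then (a, c, v)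
    else f e with hf'
  have fav : f' s(a, v) = bif i then (a, b, v) else (a, c, v) := by simp [hf']
  have fbv : f' s(b, v) = bif j then (a, b, v) else (b, c, v) := by
    simp [hf', hab.symm, hvb]
  have fcv : f' s(c, v) = bif k then (b, c, v) else (a, c, v) := by
    simp [hf', hac.symm, hbc.symm, hvc]
  have fab : f' s(a, b) = if x then (a, b, v) else f s(a, b) := by
    simp [hf', hab, hab.symm, hva, hvb, hac, hbc]
  have fbc : f' s(b, c) = if y then (b, c, v) else f s(b, c) := by
    simp [hf', hab.symm, hvb, hvc, hac.symm, hbc, hbc.symm]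
  have fac : f' s(a, c) = if z then (a, c, v) else f s(a, c) := by
    simp [hf', hab, hva, hvc, hac, hac.symm, hbc.symm]
  have keep : ∀ u w : V, u ∈ W → w ∈ W → ∀ q ≠ (a, b, c), f s(u, w) = q → f' s(u, w) = q := by
    intro u w hu hw q hq hfq
    have huv : u ≠ v := fun h => hv (h ▸ hu)
    have hwv : w ≠ v := fun h => hv (h ▸ hw)
    have hne : ∀ d, s(u, w) ≠ s(d, v) := fun d => by simp [huv, hwv]
    have hnx : ¬ (s(u, w) = s(a, b) ∧ x = true) := by
      rintro ⟨h1, h2⟩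
      simp only [hx, ← h1, hfq, hq, decide_false, Bool.false_and, Bool.false_eq_true] at h2
    have hny : ¬ (s(u, w) = s(b, c) ∧ y = true) := by
      rintro ⟨h1, h2⟩
      simp only [hy, ← h1, hfq, hq, decide_false, Bool.false_and, Bool.false_eq_true] at h2
    have hnz : ¬ (s(u, w) = s(a, c) ∧ z = true) := by
      rintro ⟨h1, h2⟩
      simp only [hz, ← h1, hfq, hq, decide_false, Bool.false_and, Bool.false_eq_true] at h2
    simp only [hf', if_neg (hne _), if_neg hnx, if_neg hny, if_neg hnz, hfq]
  obtain ⟨Y, hY, hYcard⟩ := h.exists_packing f'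
  refine ⟨Y, hY, le_trans ?_ hYcard⟩
  rw [sum_insert_triples (fun x hx => (hG.mem_and_adj x hx).1.2.2) hv hab hbc,
    ← Finset.add_sum_erase L _ hL, ← Finset.add_sum_erase L _ hL]
  have h1 : _ ≤ gainAt f' (σ (a, b, v)) (a, b, v) :=
    Gadget.closedGain_monotone (x := x) (y := j) (z := i) _
      (by cases hx : x <;> simp [fab, hx]) (by cases j <;> simp [fbv])
      (by cases i <;> simp [fav])
  have h2 : _ ≤ gainAt f' (σ (b, c, v)) (b, c, v) :=
    Gadget.closedGain_monotone (x := y) (y := k) (z := !j) _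
      (by cases hy : y <;> simp [fbc, hy]) (by cases k <;> simp [fcv])
      (by cases j <;> simp [fbv])
  have h3 : _ ≤ gainAt f' (σ (a, c, v)) (a, c, v) :=
    Gadget.closedGain_monotone (x := z) (y := !k) (z := !i) _
      (by cases hz : z <;> simp [fac, hz]) (by cases k <;> simp [fcv])
      (by cases i <;> simp [fav])
  have h4 : _ ≤ gainAt f' (σ (a, b, c)) (a, b, c) :=
    Gadget.closedGain_monotone (x := decide (f s(a, b) = (a, b, c)) && x')
      (y := decide (f s(b, c) = (a, b, c)) && y') (z := decide (f s(a, c) = (a, b, c)) && z') _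
      (by cases hx' : x' <;> simp [fab, hx, hx'])
      (by cases hy' : y' <;> simp [fbc, hy, hy'])
      (by cases hz' : z' <;> simp [fac, hz, hz'])
  have h5 : ∑ x ∈ L.erase (a, b, c), gainAt f (Function.update σ (a, b, c) N x) x ≤
      ∑ x ∈ L.erase (a, b, c), gainAt f' (σ x) x :=
    Finset.sum_le_sum fun q hq => by
      have hne := Finset.ne_of_mem_erase hq
      obtain ⟨⟨q1, q2, q3⟩, -⟩ := hG.mem_and_adj q (Finset.mem_of_mem_erase hq)
      rw [Function.update_of_ne hne]
      exact Gadget.closedGain_monotone _ (decide_le_decide_of_imp (keep _ _ q1 q2 q hne))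
        (decide_le_decide_of_imp (keep _ _ q2 q3 q hne))
        (decide_le_decide_of_imp (keep _ _ q1 q3 q hne))
  have h6 : gainAt f (Function.update σ (a, b, c) N (a, b, c)) (a, b, c) =
      N.closedGain (decide (f s(a, b) = (a, b, c))) (decide (f s(b, c) = (a, b, c)))
        (decide (f s(a, c) = (a, b, c))) := by
    rw [Function.update_self]; rfl
  omega

end GadgetBounds

theorem tau_le_card {G : SimpleGraph V} {X : Finset (Sym2 V)} (h : IsTriangleTransversal G X) :
    tau G ≤ X.card :=
  Nat.sInf_le ⟨X, h, rfl⟩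

theorem card_le_nu [Fintype V] {G : SimpleGraph V} {Y : Finset (Finset V)}
    (h : IsTrianglePacking G Y) : Y.card ≤ nu G :=
  le_csSup ⟨Fintype.card (Finset V), by rintro _ ⟨Y, -, rfl⟩; exact Y.card_le_univ⟩ ⟨Y, h, rfl⟩

theorem IsStacked.tau_le [Fintype V] [DecidableEq V] {G : SimpleGraph V} {W : Finset V}
    {L : Finset (V × V × V)} (hG : IsStacked G W L) :
    ∀ (σ : V × V × V → Gadget) (t p : ℕ), GadgetBounds G L σ t p →
      5 * t + ∑ x ∈ L, (σ x).credit ≤ 9 * p → 5 * tau G ≤ 9 * nu G + 1 := by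
  induction hG with
  | @base a b c hab hbc hac =>
    intro σ t p h hc
    obtain ⟨x, y, z, hxyz, hfin⟩ := (σ (a, b, c)).exists_final
    set F := optEdge x s(a, b) ∪ optEdge y s(b, c) ∪ optEdge z s(a, c) with hF
    have hcard : F.card ≤ x.toNat + y.toNat + z.toNat :=
      card_union_optEdge_le (card_union_optEdge_le (by cases x <;> simp [optEdge]) _ _) _ _
    have hcost : costAt F (σ (a, b, c)) (a, b, c) ≤ (σ (a, b, c)).cost x y z :=
      Gadget.cost_antitone _ (by cases x <;> simp [hF, mem_optEdge])
        (by cases y <;> simp [hF, mem_optEdge]) (by cases z <;> simp [hF, mem_optEdge])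
    obtain ⟨X, hX, hXcard⟩ := h.exists_transversal F
      (by
        intro e he
        simp only [hF, Finset.coe_union, Set.mem_union, Finset.mem_coe, mem_optEdge] at he
        rcases he with (⟨-, rfl⟩ | ⟨-, rfl⟩) | ⟨-, rfl⟩ <;> assumption)
      (by
        simp only [Bool.or_eq_true] at hxyz
        rintro _ hq
        rw [Finset.mem_singleton.1 hq]
        rcases hxyz with (h | h) | h <;> simp [Hits, hF, mem_optEdge, h])
    obtain ⟨Y, hY, hYcard⟩ := h.exists_packing fun _ => (a, b, c)
    have hgain : gainAt (fun _ => (a, b, c)) (σ (a, b, c)) (a, b, c) =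
        (σ (a, b, c)).closedGain true true true := by simp [gainAt]
    have := tau_le_card hX
    have := card_le_nu hY
    rw [Finset.sum_singleton] at hXcard hYcard hc
    omega
  | @step W L a b c v hG hL hv hadj ih =>
    intro σ t p h hc
    obtain ⟨R, t₁, p₁, hc₁, hRt, hRp⟩ :=
      Gadget.exists_attach (σ (a, b, v)) (σ (b, c, v)) (σ (a, c, v))
    obtain ⟨N, t₂, hc₂, hNt, hNp⟩ := Gadget.exists_glue (σ (a, b, c)) R
    refine ih (Function.update σ (a, b, c) N) (t + t₁ + t₂) (p + p₁)
      ⟨GadgetBounds.exists_transversal_step hG hL hv hadj h hRt hNt,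
        GadgetBounds.exists_packing_step hG hL hv h hRp hNp⟩ ?_
    obtain ⟨-, hab, hbc, -⟩ := hG.mem_and_adj _ hL
    dsimp only at hab hbc
    rw [sum_insert_triples (fun x hx => (hG.mem_and_adj x hx).1.2.2) hv hab.ne hbc.ne,
      ← Finset.add_sum_erase L _ hL] at hc
    rw [← Finset.add_sum_erase L _ hL, Function.update_self,
      Finset.sum_congr rfl fun x hx => by
        rw [Function.update_of_ne (Finset.ne_of_mem_erase hx)]]
    omega

theorem Is3Tree.exists_isStacked [Fintype V] [DecidableEq V] {G : SimpleGraph V}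
    (h : Is3Tree G) : ∃ L, IsStacked G Finset.univ L := by
  obtain ⟨n, e, hbase, hstep⟩ := h
  have key : ∀ m ≤ n, ∃ L,
      IsStacked G (Finset.univ.filter fun v => (e.symm v : ℕ) < m + 3) L := by
    intro m
    induction m with
    | zero =>
      intro _
      have hset : (Finset.univ.filter fun v => (e.symm v : ℕ) < 0 + 3) =
          {e ⟨0, by omega⟩, e ⟨1, by omega⟩, e ⟨2, by omega⟩} := by
        ext v
        simp only [Finset.mem_filter, Finset.mem_univ, true_and, Finset.mem_insert,
          Finset.mem_singleton, ← Equiv.symm_apply_eq, Fin.ext_iff]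
        omega
      rw [hset]
      exact ⟨_, .base (hbase _ _ (by simp) (by simp) (by simp))
        (hbase _ _ (by simp) (by simp) (by simp)) (hbase _ _ (by simp) (by simp) (by simp))⟩
    | succ m ih =>
      intro hm
      obtain ⟨L, hL⟩ := ih (by omega)
      obtain ⟨s, hs, hsub, hadj⟩ := hstep ⟨m + 3, by omega⟩ (by simp)
      obtain ⟨⟨a, b, c⟩, hx, rfl⟩ := hL.exists_triple s hs fun v hv => by
        obtain ⟨i, hi, rfl⟩ := hsub v hv
        simpa using hi
      have hset : (Finset.univ.filter fun v => (e.symm v : ℕ) < m + 1 + 3) =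
          insert (e ⟨m + 3, by omega⟩)
            (Finset.univ.filter fun v => (e.symm v : ℕ) < m + 3) := by
        ext v
        simp only [Finset.mem_filter, Finset.mem_univ, true_and, Finset.mem_insert,
          ← Equiv.symm_apply_eq, Fin.ext_iff]
        omega
      rw [hset]
      refine ⟨_, hL.step hx (by simp) fun u hu => ?_⟩
      have := hadj (e.symm u) (by simpa using hu)
      simpa using this
  obtain ⟨L, hL⟩ := key n le_rfl
  have huniv : (Finset.univ.filter fun v => (e.symm v : ℕ) < n + 3) = Finset.univ := by
    simp
  exact ⟨L, huniv ▸ hL⟩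

/-- If `G` is a 3-tree, then `τ(G) ≤ (9/5)·ν(G) + 1/5`. -/
theorem tuza_nine_fifths_of_three_tree (V : Type) [Fintype V] (G : SimpleGraph V)
    (h3 : Is3Tree G) : 5 * tau G ≤ 9 * nu G + 1 := by
  classical
  obtain ⟨L, hL⟩ := h3.exists_isStacked
  exact hL.tau_le _ 0 0 hL.gadgetBounds_none (by simp [Gadget.credit])
end

section
/- If G is a chordal graph containing no K8 subgraph (K8-free), then τ(G) ≤ 2·ν(G). -/
open SimpleGraph

variable {V : Type*}

/-- A graph is chordal if it has no induced cycle of length at least four. -/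
def IsChordal (G : SimpleGraph V) : Prop :=
  ∀ n : ℕ, 4 ≤ n → IsEmpty (SimpleGraph.cycleGraph n ↪g G)

/-! ### Reductions -/

/-- A set of edges `X` and a triangle packing `Y` with `|X| ≤ 2|Y|` such that every triangle
that survives the removal of `X` is edge-disjoint from the triangles in `Y`. -/
def Reducible (G : SimpleGraph V) : Prop :=
  ∃ (X : Finset (Sym2 V)) (Y : Finset (Finset V)), Y.Nonempty ∧ X.card ≤ 2 * Y.card ∧
    (∀ t ∈ Y, G.IsNClique 3 t) ∧
    (∀ s ∈ Y, ∀ t ∈ Y, s ≠ t → ∀ a b, a ≠ b → a ∈ s → b ∈ s → a ∈ t → b ∈ t → False) ∧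
    ∀ a b c, G.Adj a b → G.Adj a c → G.Adj b c → s(a, b) ∉ X → s(a, c) ∉ X → s(b, c) ∉ X →
      ∀ t ∈ Y, a ∈ t → b ∈ t → False

/-- `G` has a triangle transversal at most twice as large as some triangle packing. -/
def TuzaBound (G : SimpleGraph V) : Prop :=
  ∃ (X : Finset (Sym2 V)) (Y : Finset (Finset V)), IsTriangleTransversal G X ∧
    IsTrianglePacking G Y ∧ X.card ≤ 2 * Y.card

lemma TuzaBound.tau_le [Finite V] {G : SimpleGraph V} (h : TuzaBound G) :
    tau G ≤ 2 * nu G := by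
  classical
  have := Fintype.ofFinite V
  obtain ⟨X, Y, hX, hY, hle⟩ := h
  have h1 : tau G ≤ X.card := Nat.sInf_le ⟨X, hX, rfl⟩
  have h2 : Y.card ≤ nu G := by
    refine le_csSup ⟨(Finset.univ : Finset (Finset V)).card, ?_⟩ ⟨Y, hY, rfl⟩
    rintro _ ⟨Z, -, rfl⟩
    exact Finset.card_le_univ Z
  omega

lemma exists_triple_of_isNClique_three {G : SimpleGraph V} {t : Finset V}
    (ht : G.IsNClique 3 t) {e : Sym2 V} (he : e ∈ G.edgeSet) (het : ∀ v ∈ e, v ∈ t) :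
    ∃ a b c, e = s(a, b) ∧ G.Adj a b ∧ G.Adj a c ∧ G.Adj b c ∧
      (∀ x, x ∈ t ↔ x = a ∨ x = b ∨ x = c) := by
  classical
  induction e with
  | _ a b =>
    have hab : G.Adj a b := he
    have ha : a ∈ t := het a (by simp)
    have hb : b ∈ t := het b (by simp)
    have hcard : ((t.erase a).erase b).card = 1 := by
      rw [Finset.card_erase_of_mem (Finset.mem_erase.2 ⟨hab.ne', hb⟩),
        Finset.card_erase_of_mem ha, ht.card_eq]
    obtain ⟨c, hc⟩ := Finset.card_eq_one.1 hcard
    have hcm : c ∈ (t.erase a).erase b := by simp [hc]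
    simp only [Finset.mem_erase] at hcm
    refine ⟨a, b, c, rfl, hab, ht.isClique ha hcm.2.2 (Ne.symm hcm.2.1),
      ht.isClique hb hcm.2.2 (Ne.symm hcm.1), fun x => ?_⟩
    have := Finset.ext_iff.1 hc x
    simp only [Finset.mem_erase, Finset.mem_singleton] at this
    constructor
    · intro hx
      by_cases h1 : x = a
      · exact Or.inl h1
      by_cases h2 : x = b
      · exact Or.inr (Or.inl h2)
      exact Or.inr (Or.inr (this.1 ⟨h2, h1, hx⟩))
    · rintro (rfl | rfl | rfl)
      · exact ha
      · exact hb
      · exact hcm.2.2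

/-- Deleting an edge that lies in no triangle does not affect the bound. -/
lemma TuzaBound.of_deleteEdges_singleton {G : SimpleGraph V} {a b : V}
    (hab : ∀ c, G.Adj a c → ¬ G.Adj b c) (h : TuzaBound (G.deleteEdges {s(a, b)})) :
    TuzaBound G := by
  obtain ⟨X, Y, ⟨hX, hXt⟩, ⟨hY, hYd⟩, hle⟩ := h
  have hsub : G.deleteEdges {s(a, b)} ≤ G := G.deleteEdges_le _
  have key : ∀ t, G.IsNClique 3 t → ∀ x ∈ t, ∀ y ∈ t, x ≠ y → s(x, y) ≠ s(a, b) := by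
    intro t ht x hx y hy hxy heq
    obtain ⟨x', y', c, hxy', -, h1, h2, -⟩ := exists_triple_of_isNClique_three ht
      (e := s(x, y)) (ht.isClique hx hy hxy) (by simp [hx, hy])
    rw [heq] at hxy'
    rcases Sym2.eq_iff.1 hxy' with ⟨rfl, rfl⟩ | ⟨rfl, rfl⟩
    · exact hab c h1 h2
    · exact hab c h2 h1
  refine ⟨X, Y, ⟨fun e he => SimpleGraph.edgeSet_mono hsub (hX he), fun t ht => hXt t ?_⟩,
    ⟨fun t ht => (hY t ht).mono hsub, ?_⟩, hle⟩
  · refine ⟨fun x hx y hy hxy => ?_, ht.card_eq⟩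
    rw [SimpleGraph.deleteEdges_adj]
    exact ⟨ht.isClique hx hy hxy, key t ht x hx y hy hxy⟩
  · intro s hs t ht hst e he hboth
    obtain ⟨x, y, c, rfl, hxy, -⟩ :=
      exists_triple_of_isNClique_three ((hY s hs).mono hsub) he hboth.1
    exact hYd s hs t ht hst s(x, y) ((hY s hs).isClique (hboth.1 x (by simp))
      (hboth.1 y (by simp)) hxy.ne) hboth

/-- A reduction allows one to delete edges, at least one of them, from `G`. -/
lemma Reducible.tuzaBound {G : SimpleGraph V} (h : Reducible G)
    (ih : ∀ G' < G, TuzaBound G') : TuzaBound G := by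
  classical
  obtain ⟨X, Y, ⟨t₀, ht₀⟩, hcard, hclique, hdisj, hkill⟩ := h
  set D : Set (Sym2 V) := ↑X ∪ {e | ∃ t ∈ Y, ∀ v ∈ e, v ∈ t} with hD
  have hle : G.deleteEdges D ≤ G := G.deleteEdges_le _
  have hmemD : ∀ t ∈ Y, ∀ a ∈ t, ∀ b ∈ t, s(a, b) ∈ D := fun t ht a ha b hb =>
    Or.inr ⟨t, ht, by simp [ha, hb]⟩
  have hlt : G.deleteEdges D < G := by
    refine lt_of_le_of_ne hle fun heq => ?_
    obtain ⟨a, ha, b, hb, hab⟩ := Finset.one_lt_card.1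
      (by rw [(hclique t₀ ht₀).card_eq]; norm_num : 1 < t₀.card)
    have hadj : (G.deleteEdges D).Adj a b := by
      rw [heq]; exact (hclique t₀ ht₀).isClique ha hb hab
    rw [SimpleGraph.deleteEdges_adj] at hadj
    exact hadj.2 (hmemD t₀ ht₀ a ha b hb)
  obtain ⟨X', Y', ⟨hX', hXt'⟩, ⟨hY', hYd'⟩, hcard'⟩ := ih _ hlt
  have hYY : ∀ s ∈ Y', ∀ t ∈ Y, ∀ a b, a ≠ b → a ∈ s → b ∈ s → a ∈ t → b ∈ t → False := by
    intro s hs t ht a b hab has hbs hat hbt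
    have := (hY' s hs).isClique has hbs hab
    rw [SimpleGraph.deleteEdges_adj] at this
    exact this.2 (hmemD t ht a hat b hbt)
  have hdisjoint : Disjoint Y Y' := by
    rw [Finset.disjoint_left]
    intro t ht ht'
    obtain ⟨a, ha, b, hb, hab⟩ := Finset.one_lt_card.1
      (by rw [(hclique t ht).card_eq]; norm_num : 1 < t.card)
    exact hYY t ht' t ht a b hab ha hb ha hb
  refine ⟨X.filter (· ∈ G.edgeSet) ∪ X', Y ∪ Y', ⟨?_, ?_⟩, ⟨?_, ?_⟩, ?_⟩
  · intro e he
    rcases Finset.mem_union.1 (Finset.mem_coe.1 he) with he | he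
    · exact (Finset.mem_filter.1 he).2
    · exact SimpleGraph.edgeSet_mono hle (hX' he)
  · intro t ht
    by_cases hhit : ∃ a ∈ t, ∃ b ∈ t, a ≠ b ∧ s(a, b) ∈ X
    · obtain ⟨a, ha, b, hb, hab, hX⟩ := hhit
      exact ⟨s(a, b), Finset.mem_union_left _ (Finset.mem_filter.2
        ⟨hX, ht.isClique ha hb hab⟩), by simp [ha, hb]⟩
    · push Not at hhit
      have ht' : (G.deleteEdges D).IsNClique 3 t := by
        refine ⟨fun x hx y hy hxy => ?_, ht.card_eq⟩
        rw [SimpleGraph.deleteEdges_adj]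
        refine ⟨ht.isClique hx hy hxy, ?_⟩
        rintro (hmem | ⟨s, hs, hes⟩)
        · exact hhit x hx y hy hxy hmem
        · obtain ⟨a, b, c, heq, hab, hac, hbc, hmem⟩ := exists_triple_of_isNClique_three ht
            (e := s(x, y)) (ht.isClique hx hy hxy) (by
              intro v hv
              rcases Sym2.mem_iff.1 hv with rfl | rfl
              · exact hx
              · exact hy)
          have ha : a ∈ t := (hmem a).2 (by simp)
          have hb : b ∈ t := (hmem b).2 (by simp)
          have hc : c ∈ t := (hmem c).2 (by simp)
          rw [heq] at hes
          exact hkill a b c hab hac hbc (hhit a ha b hb hab.ne) (hhit a ha c hc hac.ne)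
            (hhit b hb c hc hbc.ne) s hs (hes a (by simp)) (hes b (by simp))
      obtain ⟨e, he, het⟩ := hXt' t ht'
      exact ⟨e, Finset.mem_union_right _ he, het⟩
  · intro t ht
    rcases Finset.mem_union.1 ht with ht | ht
    · exact hclique t ht
    · exact (hY' t ht).mono hle
  · intro s hs t ht hst e he
    induction e with
    | _ a b =>
      have hab : a ≠ b := (SimpleGraph.mem_edgeSet G |>.1 he).ne
      simp only [Sym2.mem_iff, forall_eq_or_imp, forall_eq]
      rintro ⟨⟨has, hbs⟩, hat, hbt⟩
      rcases Finset.mem_union.1 hs with hs | hs <;> rcases Finset.mem_union.1 ht with ht | ht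
      · exact hdisj s hs t ht hst a b hab has hbs hat hbt
      · exact hYY t ht s hs a b hab hat hbt has hbs
      · exact hYY s hs t ht a b hab has hbs hat hbt
      · exact hYd' s hs t ht hst s(a, b) ((hY' s hs).isClique has hbs hab)
          (by simp [has, hbs, hat, hbt])
  · rw [Finset.card_union_of_disjoint hdisjoint]
    have h1 := Finset.card_union_le (X.filter (· ∈ G.edgeSet)) X'
    have h2 := Finset.card_filter_le X (· ∈ G.edgeSet)
    omega

/-! ### Reductions described by labels -/

/-- The unordered pair `{i, j}` is listed in `L`. -/
def hasPair (L : List (ℕ × ℕ)) (i j : ℕ) : Bool := L.contains (i, j) || L.contains (j, i)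

/-- The list of the entries of a triple. -/
def tripleList (t : ℕ × ℕ × ℕ) : List ℕ := [t.1, t.2.1, t.2.2]

/-- A combinatorial certificate for reducibility on `k` labels, the first `n` of which stand for
vertices all of whose neighbours are labelled. `N` lists non-adjacent pairs, `X` lists the edges
to be removed and `Y` is the triangle packing. -/
def templateCheck (k n : ℕ) (N X : List (ℕ × ℕ)) (Y : List (ℕ × ℕ × ℕ)) : Bool :=
  !Y.isEmpty && Nat.ble X.length (2 * Y.length) &&
  Y.all (fun t => (tripleList t).all (fun i => Nat.blt i k)) &&
  decide (Y.Pairwise fun s t => (tripleList s).all fun i => (tripleList s).all fun j =>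
    i == j || !((tripleList t).contains i && (tripleList t).contains j)) &&
  Y.all (fun t => (tripleList t).all fun i => (tripleList t).all fun j =>
    i == j || hasPair X i j || ((Nat.blt i n || Nat.blt j n) && (List.range k).all fun m =>
      m == i || m == j || hasPair X i m || hasPair X j m || hasPair N i m || hasPair N j m))

/-- A valid certificate realised in `G` by the vertices in the list `v :: l` is a reduction. -/
lemma reducible_of_template {G : SimpleGraph V} (v : V) (l : List V) (n : ℕ)
    (N X : List (ℕ × ℕ)) (Y : List (ℕ × ℕ × ℕ)) (hl : (v :: l).Nodup)
    (hpriv : ∀ i < n, ∀ x, G.Adj ((v :: l).getD i v) x → x ∈ v :: l)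
    (hN : ∀ p ∈ N, ¬ G.Adj ((v :: l).getD p.1 v) ((v :: l).getD p.2 v))
    (hY : ∀ t ∈ Y, G.Adj ((v :: l).getD t.1 v) ((v :: l).getD t.2.1 v) ∧
      G.Adj ((v :: l).getD t.1 v) ((v :: l).getD t.2.2 v) ∧
      G.Adj ((v :: l).getD t.2.1 v) ((v :: l).getD t.2.2 v))
    (hcheck : templateCheck (l.length + 1) n N X Y = true) : Reducible G := by
  classical
  set φ : ℕ → V := fun i => (v :: l).getD i v with hφ
  have hφinj : ∀ i j, i < l.length + 1 → j < l.length + 1 → φ i = φ j → i = j := by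
    intro i j hi hj h
    simp only [hφ] at h
    rw [List.getD_eq_getElem _ _ (by simpa using hi), List.getD_eq_getElem _ _ (by simpa using hj)]
      at h
    exact (hl.getElem_inj_iff).1 h
  have hφsurj : ∀ x ∈ v :: l, ∃ i < l.length + 1, φ i = x := by
    intro x hx
    obtain ⟨i, hi, rfl⟩ := List.getElem_of_mem hx
    exact ⟨i, by simpa using hi, List.getD_eq_getElem _ _ hi⟩
  simp only [templateCheck, Bool.and_eq_true, decide_eq_true_eq, List.all_eq_true,
    Bool.or_eq_true, beq_iff_eq, Bool.not_eq_true', Nat.ble_eq, Nat.blt_eq,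
    List.isEmpty_eq_false_iff, List.mem_range] at hcheck
  obtain ⟨⟨⟨⟨hne, hcard⟩, hYlt⟩, hpair⟩, hkill⟩ := hcheck
  set T : ℕ × ℕ × ℕ → Finset V := fun t => {φ t.1, φ t.2.1, φ t.2.2} with hT
  have hTmem : ∀ t x, x ∈ T t ↔ ∃ i ∈ tripleList t, φ i = x := by
    intro t x
    simp [hT, tripleList, eq_comm]
  have hadj : ∀ t ∈ Y, G.IsNClique 3 (T t) := by
    intro t ht
    obtain ⟨h1, h2, h3⟩ := hY t ht
    exact SimpleGraph.is3Clique_triple_iff.2 ⟨h1, h2, h3⟩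
  have hshare : Y.Pairwise fun s t => ∀ a b, a ≠ b → a ∈ T s → b ∈ T s → a ∈ T t → b ∈ T t →
      False := by
    refine hpair.imp_of_mem fun {s t} hs ht h a b hab has hbs hat hbt => ?_
    obtain ⟨i, hi, rfl⟩ := (hTmem s a).1 has
    obtain ⟨j, hj, rfl⟩ := (hTmem s b).1 hbs
    obtain ⟨i', hi', hii'⟩ := (hTmem t _).1 hat
    obtain ⟨j', hj', hjj'⟩ := (hTmem t _).1 hbt
    have e1 := hφinj _ _ (hYlt t ht _ hi') (hYlt s hs _ hi) hii'
    have e2 := hφinj _ _ (hYlt t ht _ hj') (hYlt s hs _ hj) hjj'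
    subst e1 e2
    rcases h _ hi _ hj with h | h
    · exact hab (by rw [h])
    · simp [hi', hj'] at h
  have hnodup : (Y.map T).Nodup := by
    rw [List.Nodup, List.pairwise_map]
    refine hshare.imp_of_mem fun {s t} hs ht h heq => ?_
    obtain ⟨a, ha, b, hb, hab⟩ := Finset.one_lt_card.1
      (by rw [(hadj s hs).card_eq]; norm_num : 1 < (T s).card)
    exact h a b hab ha hb (heq ▸ ha) (heq ▸ hb)
  have hXmem : ∀ i j, hasPair X i j = true →
      s(φ i, φ j) ∈ (X.map fun p => s(φ p.1, φ p.2)).toFinset := by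
    intro i j h
    simp only [hasPair, Bool.or_eq_true, List.contains_iff_mem] at h
    rw [List.mem_toFinset, List.mem_map]
    rcases h with h | h
    · exact ⟨_, h, rfl⟩
    · exact ⟨_, h, Sym2.eq_swap⟩
  have hNmem : ∀ i j, hasPair N i j = true → ¬ G.Adj (φ i) (φ j) := by
    intro i j h
    simp only [hasPair, Bool.or_eq_true, List.contains_iff_mem] at h
    rcases h with h | h
    · exact hN _ h
    · exact fun h' => hN _ h h'.symm
  refine ⟨(X.map fun p => s(φ p.1, φ p.2)).toFinset, (Y.map T).toFinset, ?_, ?_, ?_, ?_, ?_⟩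
  · rw [List.toFinset_nonempty_iff]
    simpa using hne
  · rw [List.toFinset_card_of_nodup hnodup, List.length_map]
    exact (List.toFinset_card_le _).trans (by simpa using hcard)
  · intro t' ht'
    obtain ⟨t, ht, rfl⟩ := List.mem_map.1 (List.mem_toFinset.1 ht')
    exact hadj t ht
  · intro s' hs' t' ht' hst a b hab has hbs hat hbt
    obtain ⟨s, hs, rfl⟩ := List.mem_map.1 (List.mem_toFinset.1 hs')
    obtain ⟨t, ht, rfl⟩ := List.mem_map.1 (List.mem_toFinset.1 ht')
    have : Std.Symm fun s t => ∀ a b, a ≠ b → a ∈ T s → b ∈ T s → a ∈ T t → b ∈ T t → False :=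
      ⟨fun x y h a b h1 h2 h3 h4 h5 => h a b h1 h4 h5 h2 h3⟩
    exact hshare.forall hs ht (fun h => hst (by rw [h])) a b hab has hbs hat hbt
  · intro a b c hab hac hbc hXab hXac hXbc t' ht' hat hbt
    obtain ⟨t, ht, rfl⟩ := List.mem_map.1 (List.mem_toFinset.1 ht')
    obtain ⟨i, hi, rfl⟩ := (hTmem t a).1 hat
    obtain ⟨j, hj, rfl⟩ := (hTmem t b).1 hbt
    rcases hkill t ht i hi j hj with (h | h) | ⟨hn, h⟩
    · exact hab.ne (by rw [h])
    · exact hXab (hXmem i j h)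
    · have hc : c ∈ v :: l := by
        rcases hn with hn | hn
        · exact hpriv i hn c hac
        · exact hpriv j hn c hbc
      obtain ⟨m, hm, rfl⟩ := hφsurj c hc
      rcases h m hm with ((((h | h) | h) | h) | h) | h
      · exact hac.ne (by rw [h])
      · exact hbc.ne (by rw [h])
      · exact hXac (hXmem i m h)
      · exact hXbc (hXmem j m h)
      · exact hNmem i m h hac
      · exact hNmem j m h hbc

/-! ### Neighbourhoods of at most six vertices -/

/-- The entries of `l` are distinct and are exactly the neighbours of `v`. -/
def IsStar (G : SimpleGraph V) (v : V) (l : List V) : Prop :=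
  (v :: l).Nodup ∧ ∀ x, G.Adj v x ↔ x ∈ l

lemma IsStar.perm {G : SimpleGraph V} {v : V} {l l' : List V} (h : IsStar G v l)
    (hsub : l ⊆ l') (hlen : l'.length ≤ l.length) : IsStar G v l' := by
  have hp : l.Perm l' := ((List.nodup_cons.1 h.1).2.subperm hsub).perm_of_length_le hlen
  exact ⟨(hp.cons v).nodup_iff.1 h.1, fun x => (h.2 x).trans hp.mem_iff⟩

/-- Every edge of `G` lies in a triangle. -/
def EdgesInTriangles (G : SimpleGraph V) : Prop :=
  ∀ a b, G.Adj a b → ∃ c, G.Adj a c ∧ G.Adj b c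

lemma IsStar.reducible {G : SimpleGraph V} {v : V} {l : List V} (h : IsStar G v l)
    (N X : List (ℕ × ℕ)) (Y : List (ℕ × ℕ × ℕ))
    (hN : ∀ p ∈ N, ¬ G.Adj ((v :: l).getD p.1 v) ((v :: l).getD p.2 v))
    (hY : ∀ t ∈ Y, G.Adj ((v :: l).getD t.1 v) ((v :: l).getD t.2.1 v) ∧
      G.Adj ((v :: l).getD t.1 v) ((v :: l).getD t.2.2 v) ∧
      G.Adj ((v :: l).getD t.2.1 v) ((v :: l).getD t.2.2 v))
    (hcheck : templateCheck (l.length + 1) 1 N X Y = true) : Reducible G :=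
  reducible_of_template v l 1 N X Y h.1 (fun i hi x hx => by
    obtain rfl : i = 0 := by omega
    exact List.mem_cons_of_mem _ ((h.2 x).1 hx)) hN hY hcheck

lemma IsStar.reducible_two {G : SimpleGraph V} {v a b : V} (h : IsStar G v [a, b])
    (hab : G.Adj a b) : Reducible G := by
  have hv := h.2
  refine h.reducible [] [(1, 2)] [(0, 1, 2)] ?_ ?_ rfl
  · simp
  · simp [hv, hab]

lemma IsStar.reducible_three {G : SimpleGraph V} {v a b c : V} (h : IsStar G v [a, b, c])
    (hab : G.Adj a b) : Reducible G := by
  have hv := h.2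
  refine h.reducible [] [(1, 2), (0, 3)] [(0, 1, 2)] ?_ ?_ rfl
  · simp
  · simp [hv, hab]

lemma IsStar.exists_adj {G : SimpleGraph V} {v : V} {l : List V} (h : IsStar G v l)
    (hT : EdgesInTriangles G) : ∀ x ∈ l, ∃ y ∈ l, G.Adj x y := by
  intro x hx
  obtain ⟨c, h1, h2⟩ := hT v x ((h.2 x).2 hx)
  exact ⟨c, (h.2 c).1 h1, h2⟩

lemma IsStar.reducible_four {G : SimpleGraph V} {v a b c d : V} (h : IsStar G v [a, b, c, d])
    (hT : EdgesInTriangles G) : Reducible G := by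
  by_cases hm : ∃ a b c d, IsStar G v [a, b, c, d] ∧ G.Adj a b ∧ G.Adj c d
  · obtain ⟨a, b, c, d, h, hab, hcd⟩ := hm
    have hv := h.2
    refine h.reducible [] [(1, 2), (3, 4), (0, 1), (0, 2)] [(0, 1, 2), (0, 3, 4)] ?_ ?_ rfl
    · simp
    · simp [hv, hab, hcd]
  have star : ∀ a b c d, IsStar G v [a, b, c, d] → G.Adj a b → G.Adj a c → Reducible G := by
    intro a b c d h hab hac
    have hv := h.2
    have m1 : ¬ (G.Adj a b ∧ G.Adj c d) := fun hh => hm ⟨a, b, c, d, h, hh⟩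
    have m2 : ¬ (G.Adj a c ∧ G.Adj b d) :=
      fun hh => hm ⟨a, c, b, d, h.perm (by simp) (by simp), hh⟩
    have m3 : ¬ (G.Adj a d ∧ G.Adj b c) :=
      fun hh => hm ⟨a, d, b, c, h.perm (by simp) (by simp), hh⟩
    have h4 := h.exists_adj hT d (by simp)
    simp only [List.mem_cons, List.not_mem_nil, or_false, exists_eq_or_imp, exists_eq_left] at h4
    have hd : G.Adj a d := by grind [SimpleGraph.Adj.symm, SimpleGraph.irrefl]
    refine h.reducible [(2, 3), (2, 4), (3, 4)] [(1, 2), (0, 1)] [(0, 1, 2)] ?_ ?_ rfl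
    · simp; tauto
    · simp [hv, hab]
  have first : ∀ a b c d, IsStar G v [a, b, c, d] → G.Adj a b → Reducible G := by
    intro a b c d h hab
    have h3 := h.exists_adj hT c (by simp)
    simp only [List.mem_cons, List.not_mem_nil, or_false, exists_eq_or_imp, exists_eq_left] at h3
    rcases h3 with h3 | h3 | h3 | h3
    · exact star a b c d h hab h3.symm
    · exact star b a c d (h.perm (by simp) (by simp)) hab.symm h3.symm
    · exact (G.irrefl h3).elim
    · exact (hm ⟨a, b, c, d, h, hab, h3⟩).elim
  have h1 := h.exists_adj hT a (by simp)
  simp only [List.mem_cons, List.not_mem_nil, or_false, exists_eq_or_imp, exists_eq_left] at h1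
  rcases h1 with h1 | h1 | h1 | h1
  · exact (G.irrefl h1).elim
  · exact first a b c d h h1
  · exact first a c b d (h.perm (by simp) (by simp)) h1
  · exact first a d c b (h.perm (by simp) (by simp)) h1

/-- All pairs of entries of the list are adjacent, except possibly the first two entries. -/
def NearClique (G : SimpleGraph V) : List V → Prop
  | a :: b :: t => (∀ x ∈ t, G.Adj a x) ∧ (∀ x ∈ t, G.Adj b x) ∧ t.Pairwise G.Adj
  | _ => True

lemma IsStar.reducible_five_of_indep {G : SimpleGraph V} {v x y z p q : V}
    (h : IsStar G v [x, y, z, p, q]) (hT : EdgesInTriangles G) (hxy : ¬ G.Adj x y)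
    (hxz : ¬ G.Adj x z) (hyz : ¬ G.Adj y z) : Reducible G := by
  have key : ∀ x y z p q, IsStar G v [x, y, z, p, q] → ¬ G.Adj x y → ¬ G.Adj x z → ¬ G.Adj y z →
      G.Adj x p → G.Adj y q → Reducible G := by
    intro x y z p q h hxy hxz hyz hxp hyq
    have hv := h.2
    refine h.reducible [(1, 2), (1, 3), (2, 3)] [(1, 4), (2, 5), (0, 4), (0, 5)]
      [(0, 1, 4), (0, 2, 5)] ?_ ?_ rfl
    · simp [*]
    · simp [*]
  have wlog_adj : ∀ x y z p q, IsStar G v [x, y, z, p, q] → ¬ G.Adj x y → ¬ G.Adj x z →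
      ¬ G.Adj y z → G.Adj x p → Reducible G := by
    intro x y z p q h hxy hxz hyz hxp
    have hv := h.2
    by_cases hyq : G.Adj y q
    · exact key x y z p q h hxy hxz hyz hxp hyq
    by_cases hzq : G.Adj z q
    · exact key x z y p q (h.perm (by simp) (by simp)) hxz hxy (fun h => hyz h.symm) hxp hzq
    have hy := h.exists_adj hT y (by simp)
    have hyp : G.Adj y p := by simpa [G.adj_comm y x, hxy, hyz, hyq] using hy
    by_cases hxq : G.Adj x q
    · exact key y x z p q (h.perm (by simp) (by simp)) (fun h => hxy h.symm) hyz hxz hyp hxq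
    refine h.reducible [(1, 2), (1, 3), (2, 3), (1, 5), (2, 5), (3, 5)] [(1, 4), (0, 4)]
      [(0, 1, 4)] ?_ ?_ rfl
    · simp [*]
    · simp [*]
  have hx := h.exists_adj hT x (by simp)
  simp only [List.mem_cons, List.not_mem_nil, or_false, exists_eq_or_imp, exists_eq_left] at hx
  rcases hx with hx | hx | hx | hx | hx
  · exact (G.irrefl hx).elim
  · exact (hxy hx).elim
  · exact (hxz hx).elim
  · exact wlog_adj x y z p q h hxy hxz hyz hx
  · exact wlog_adj x y z q p (h.perm (by simp) (by simp)) hxy hxz hyz hx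

lemma IsStar.reducible_five_of_not_adj {G : SimpleGraph V} {v x y z p q : V}
    (h : IsStar G v [x, y, z, p, q]) (hT : EdgesInTriangles G)
    (hzx : ¬ G.Adj z x) (hzy : ¬ G.Adj z y) : Reducible G := by
  by_cases hxy : G.Adj x y
  · have key : ∀ p q, IsStar G v [x, y, z, p, q] → G.Adj z p → Reducible G := by
      intro p q h hzp
      have hv := h.2
      refine h.reducible [(3, 1), (3, 2)] [(1, 2), (3, 4), (0, 4), (0, 5)]
        [(0, 1, 2), (0, 3, 4)] ?_ ?_ rfl
      · simp [*]
      · simp [*]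
    have hz := h.exists_adj hT z (by simp)
    simp only [List.mem_cons, List.not_mem_nil, or_false, exists_eq_or_imp, exists_eq_left] at hz
    rcases hz with hz | hz | hz | hz | hz
    · exact (hzx hz).elim
    · exact (hzy hz).elim
    · exact (G.irrefl hz).elim
    · exact key p q h hz
    · exact key q p (h.perm (by simp) (by simp)) hz
  · exact h.reducible_five_of_indep hT hxy (fun h => hzx h.symm) (fun h => hzy h.symm)

/-- A vertex of degree five admits a reduction unless its neighbourhood is almost complete. -/
lemma IsStar.reducible_or_nearClique_five {G : SimpleGraph V} {v a b c d e : V}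
    (h : IsStar G v [a, b, c, d, e]) (hT : EdgesInTriangles G) :
    Reducible G ∨ ∃ a b c d e, IsStar G v [a, b, c, d, e] ∧ NearClique G [a, b, c, d, e] := by
  by_contra! ⟨hR, hN⟩
  have hmatch : ∀ x y z p q, IsStar G v [x, y, z, p, q] → ¬ G.Adj z x → ¬ G.Adj z y → False :=
    fun x y z p q h h1 h2 => hR (h.reducible_five_of_not_adj hT h1 h2)
  by_cases hmiss : ∃ a b c d e, IsStar G v [a, b, c, d, e] ∧ ¬ G.Adj a b
  · obtain ⟨a, b, c, d, e, h, hab⟩ := hmiss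
    have hac : G.Adj a c := by
      by_contra hh; exact hmatch b c a d e (h.perm (by simp) (by simp)) hab hh
    have had : G.Adj a d := by
      by_contra hh; exact hmatch b d a c e (h.perm (by simp) (by simp)) hab hh
    have hae : G.Adj a e := by
      by_contra hh; exact hmatch b e a d c (h.perm (by simp) (by simp)) hab hh
    have hbc : G.Adj b c := by
      by_contra hh; exact hmatch a c b d e (h.perm (by simp) (by simp)) (fun h => hab h.symm) hh
    have hbd : G.Adj b d := by
      by_contra hh; exact hmatch a d b c e (h.perm (by simp) (by simp)) (fun h => hab h.symm) hh
    have hbe : G.Adj b e := by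
      by_contra hh; exact hmatch a e b d c (h.perm (by simp) (by simp)) (fun h => hab h.symm) hh
    have two : ∀ a b c d e, IsStar G v [a, b, c, d, e] → ¬ G.Adj a b → ¬ G.Adj c d → G.Adj a c →
        G.Adj a d → G.Adj a e → G.Adj b c → G.Adj b d → G.Adj b e → False := by
      intro a b c d e h hab hcd hac had hae hbc hbd hbe
      have hce : G.Adj c e := by
        by_contra hh; exact hmatch d e c a b (h.perm (by simp) (by simp)) hcd hh
      have hde : G.Adj d e := by
        by_contra hh
        exact hmatch c e d a b (h.perm (by simp) (by simp)) (fun h => hcd h.symm) hh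
      have hv := h.2
      refine hR (h.reducible [(1, 2), (3, 4)] [(1, 3), (1, 4), (2, 3), (2, 4), (1, 5), (2, 5),
        (3, 5), (4, 5)] [(1, 3, 5), (0, 1, 4), (0, 2, 3), (2, 4, 5)] ?_ ?_ rfl)
      · simp [*]
      · simp [*]
    refine hN a b c d e h ⟨by simp [*], by simp [*], ?_⟩
    simp only [List.pairwise_cons, List.mem_cons, List.not_mem_nil, or_false, forall_eq_or_imp,
      forall_eq, List.Pairwise.nil, and_true, IsEmpty.forall_iff, implies_true]
    refine ⟨⟨?_, ?_⟩, ?_⟩ <;> by_contra hh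
    · exact two a b c d e h hab hh hac had hae hbc hbd hbe
    · exact two a b c e d (h.perm (by simp) (by simp)) hab hh hac hae had hbc hbe hbd
    · exact two a b d e c (h.perm (by simp) (by simp)) hab hh had hae hac hbd hbe hbc
  · push Not at hmiss
    refine hN a b c d e h ⟨?_, ?_, ?_⟩
    · simp only [List.mem_cons, List.not_mem_nil, or_false, forall_eq_or_imp, forall_eq]
      exact ⟨hmiss a c b d e (h.perm (by simp) (by simp)),
        hmiss a d b c e (h.perm (by simp) (by simp)), hmiss a e b c d (h.perm (by simp) (by simp))⟩
    · simp only [List.mem_cons, List.not_mem_nil, or_false, forall_eq_or_imp, forall_eq]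
      exact ⟨hmiss b c a d e (h.perm (by simp) (by simp)),
        hmiss b d a c e (h.perm (by simp) (by simp)), hmiss b e a c d (h.perm (by simp) (by simp))⟩
    · simp only [List.pairwise_cons, List.mem_cons, List.not_mem_nil, or_false, forall_eq_or_imp,
        forall_eq, List.Pairwise.nil, and_true, IsEmpty.forall_iff, implies_true]
      exact ⟨⟨hmiss c d b a e (h.perm (by simp) (by simp)),
        hmiss c e a b d (h.perm (by simp) (by simp))⟩, hmiss d e a b c (h.perm (by simp) (by simp))⟩

lemma IsStar.reducible_six_of_indep {G : SimpleGraph V} {v x y z p q r : V}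
    (h : IsStar G v [x, y, z, p, q, r]) (hT : EdgesInTriangles G) (hxy : ¬ G.Adj x y)
    (hxz : ¬ G.Adj x z) (hyz : ¬ G.Adj y z) : Reducible G := by
  by_contra hR
  have perfect : ∀ x y z p q r, IsStar G v [x, y, z, p, q, r] → ¬ G.Adj x y → ¬ G.Adj x z →
      ¬ G.Adj y z → G.Adj x p → G.Adj y q → G.Adj z r → False := by
    intro x y z p q r h hxy hxz hyz hxp hyq hzr
    have hv := h.2
    refine hR (h.reducible [(1, 2), (1, 3), (2, 3)]
      [(1, 4), (2, 5), (3, 6), (0, 4), (0, 5), (0, 6)] [(0, 1, 4), (0, 2, 5), (0, 3, 6)] ?_ ?_ rfl)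
    · simp [*]
    · simp [*]
  have cover : ∀ x y z p q r, IsStar G v [x, y, z, p, q, r] → ¬ G.Adj x y → ¬ G.Adj x z →
      ¬ G.Adj y z → G.Adj x p → G.Adj y q → ¬ G.Adj x r → ¬ G.Adj y r → ¬ G.Adj z r → False := by
    intro x y z p q r h hxy hxz hyz hxp hyq hxr hyr hzr
    have hv := h.2
    refine hR (h.reducible [(1, 2), (1, 3), (2, 3), (1, 6), (2, 6), (3, 6)]
      [(1, 4), (2, 5), (0, 4), (0, 5)] [(0, 1, 4), (0, 2, 5)] ?_ ?_ rfl)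
    · simp [*]
    · simp [*]
  have augment : ∀ x y z p q r, IsStar G v [x, y, z, p, q, r] → ¬ G.Adj x y → ¬ G.Adj x z →
      ¬ G.Adj y z → G.Adj x p → G.Adj y q → G.Adj z p → False := by
    intro x y z p q r h hxy hxz hyz hxp hyq hzp
    have hv := h.2
    have hyx : ¬ G.Adj y x := fun h => hxy h.symm
    have hzx : ¬ G.Adj z x := fun h => hxz h.symm
    have hzy : ¬ G.Adj z y := fun h => hyz h.symm
    have hzr : ¬ G.Adj z r := fun hzr => perfect x y z p q r h hxy hxz hyz hxp hyq hzr
    have hxr : ¬ G.Adj x r := fun hxr =>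
      perfect z y x p q r (h.perm (by simp) (by simp)) hzy hzx hyx hzp hyq hxr
    by_cases hyr : G.Adj y r
    · have hzq : ¬ G.Adj z q := fun hzq =>
        perfect x z y p q r (h.perm (by simp) (by simp)) hxz hxy hzy hxp hzq hyr
      have hxq : ¬ G.Adj x q := fun hxq =>
        perfect z x y p q r (h.perm (by simp) (by simp)) hzx hzy hxy hzp hxq hyr
      refine hR (h.reducible [(1, 2), (1, 3), (2, 3), (1, 5), (1, 6), (3, 5), (3, 6)]
        [(1, 4), (2, 5), (0, 4), (0, 6)] [(0, 1, 4), (0, 2, 5)] ?_ ?_ rfl)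
      · simp [*]
      · simp [*]
    · exact cover x y z p q r h hxy hxz hyz hxp hyq hxr hyr hzr
  have matching : ∀ x y z p q r, IsStar G v [x, y, z, p, q, r] → ¬ G.Adj x y → ¬ G.Adj x z →
      ¬ G.Adj y z → G.Adj x p → G.Adj y q → False := by
    intro x y z p q r h hxy hxz hyz hxp hyq
    have hz := h.exists_adj hT z (by simp)
    simp only [List.mem_cons, List.not_mem_nil, or_false, exists_eq_or_imp, exists_eq_left] at hz
    rcases hz with hz | hz | hz | hz | hz | hz
    · exact hxz hz.symm
    · exact hyz hz.symm
    · exact G.irrefl hz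
    · exact augment x y z p q r h hxy hxz hyz hxp hyq hz
    · exact augment y x z q p r (h.perm (by simp) (by simp)) (fun h => hxy h.symm) hyz hxz hyq
        hxp hz
    · exact perfect x y z p q r h hxy hxz hyz hxp hyq hz
  have single : ∀ x y z p q r, IsStar G v [x, y, z, p, q, r] → ¬ G.Adj x y → ¬ G.Adj x z →
      ¬ G.Adj y z → G.Adj x p → False := by
    intro x y z p q r h hxy hxz hyz hxp
    have hv := h.2
    have hyx : ¬ G.Adj y x := fun h => hxy h.symm
    have hzx : ¬ G.Adj z x := fun h => hxz h.symm
    have hzy : ¬ G.Adj z y := fun h => hyz h.symm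
    have hyq : ¬ G.Adj y q := fun hh => matching x y z p q r h hxy hxz hyz hxp hh
    have hyr : ¬ G.Adj y r := fun hh =>
      matching x y z p r q (h.perm (by simp) (by simp)) hxy hxz hyz hxp hh
    have hzq : ¬ G.Adj z q := fun hh =>
      matching x z y p q r (h.perm (by simp) (by simp)) hxz hxy hzy hxp hh
    have hzr : ¬ G.Adj z r := fun hh =>
      matching x z y p r q (h.perm (by simp) (by simp)) hxz hxy hzy hxp hh
    have hy := h.exists_adj hT y (by simp)
    have hyp : G.Adj y p := by simpa [hyx, hyz, hyq, hyr] using hy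
    have hxq : ¬ G.Adj x q := fun hh =>
      matching y x z p q r (h.perm (by simp) (by simp)) hyx hyz hxz hyp hh
    have hxr : ¬ G.Adj x r := fun hh =>
      matching y x z p r q (h.perm (by simp) (by simp)) hyx hyz hxz hyp hh
    by_cases hqr : G.Adj q r
    · refine hR (h.reducible [(1, 2), (1, 3), (2, 3), (1, 5), (1, 6), (2, 5), (2, 6), (3, 5),
        (3, 6)]
        [(1, 4), (5, 6), (0, 4)] [(0, 1, 4), (0, 5, 6)] ?_ ?_ rfl)
      · simp [*]
      · simp [*]
    · refine hR (h.reducible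
        [(1, 2), (1, 3), (2, 3), (1, 5), (1, 6), (2, 5), (2, 6), (3, 5), (3, 6), (5, 6)]
        [(1, 4), (0, 4)] [(0, 1, 4)] ?_ ?_ rfl)
      · simp [*]
      · simp [*]
  have hx := h.exists_adj hT x (by simp)
  simp only [List.mem_cons, List.not_mem_nil, or_false, exists_eq_or_imp, exists_eq_left] at hx
  rcases hx with hx | hx | hx | hx | hx | hx
  · exact G.irrefl hx
  · exact hxy hx
  · exact hxz hx
  · exact single x y z p q r h hxy hxz hyz hx
  · exact single x y z q p r (h.perm (by simp) (by simp)) hxy hxz hyz hx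
  · exact single x y z r p q (h.perm (by simp) (by simp)) hxy hxz hyz hx

lemma IsStar.reducible_six_of_not_adj {G : SimpleGraph V} {v x y z p q r : V}
    (h : IsStar G v [x, y, z, p, q, r]) (hT : EdgesInTriangles G)
    (hzx : ¬ G.Adj z x) (hzy : ¬ G.Adj z y) : Reducible G := by
  by_contra hR
  have indep : ∀ x y z p q r, IsStar G v [x, y, z, p, q, r] → ¬ G.Adj x y → ¬ G.Adj x z →
      ¬ G.Adj y z → False :=
    fun x y z p q r h h1 h2 h3 => hR (h.reducible_six_of_indep hT h1 h2 h3)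
  have perfect : ∀ x y z p q r, IsStar G v [x, y, z, p, q, r] → ¬ G.Adj z x → ¬ G.Adj z y →
      G.Adj x y → G.Adj z p → ¬ G.Adj q r := by
    intro x y z p q r h hzx hzy hxy hzp hqr
    have hv := h.2
    refine hR (h.reducible [(3, 1), (3, 2)] [(1, 2), (3, 4), (5, 6), (0, 4), (0, 5), (0, 6)]
      [(0, 1, 2), (0, 3, 4), (0, 5, 6)] ?_ ?_ rfl)
    · simp [*]
    · simp [*]
  have hxz : ¬ G.Adj x z := fun h => hzx h.symm
  have hyz : ¬ G.Adj y z := fun h => hzy h.symm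
  have hxy : G.Adj x y := by
    by_contra hxy
    exact indep x y z p q r h hxy hxz hyz
  have common : ∀ x y p q r, IsStar G v [x, y, z, p, q, r] → G.Adj x y → ¬ G.Adj z x →
      ¬ G.Adj z y → G.Adj z p → G.Adj z q → ¬ G.Adj z r → ¬ G.Adj q r → ¬ G.Adj p r →
      G.Adj r x → False := by
    intro x y p q r h hxy hzx hzy hzp hzq hzr hqr hpr hrx
    have hv := h.2
    have hrz : ¬ G.Adj r z := fun h => hzr h.symm
    have hrp : ¬ G.Adj r p := fun h => hpr h.symm
    have hrq : ¬ G.Adj r q := fun h => hqr h.symm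
    have hyq := perfect p z r x y q (h.perm (by simp) (by simp)) hrp hrz hzp.symm hrx
    have hyp := perfect q z r x y p (h.perm (by simp) (by simp)) hrq hrz hzq.symm hrx
    by_cases hry : G.Adj r y
    · have hxq := perfect p z r y x q (h.perm (by simp) (by simp)) hrp hrz hzp.symm hry
      have hxp := perfect q z r y x p (h.perm (by simp) (by simp)) hrq hrz hzq.symm hry
      refine hR (h.reducible [(3, 1), (3, 2), (3, 6), (4, 6), (5, 6), (2, 4), (2, 5), (1, 4),
        (1, 5)]
        [(1, 2), (3, 4), (0, 6), (0, 5)] [(0, 1, 2), (0, 3, 4)] ?_ ?_ rfl)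
      · simp [*]
      · simp [*]
    · exact indep y r z x p q (h.perm (by simp) (by simp)) (fun h => hry h.symm)
        (fun h => hzy h.symm) hrz
  have two : ∀ p q r, IsStar G v [x, y, z, p, q, r] → G.Adj z p → G.Adj z q → False := by
    intro p q r h hzp hzq
    have hqr := perfect x y z p q r h hzx hzy hxy hzp
    have hpr := perfect x y z q p r (h.perm (by simp) (by simp)) hzx hzy hxy hzq
    by_cases hzr : G.Adj z r
    · have hpq := perfect x y z r p q (h.perm (by simp) (by simp)) hzx hzy hxy hzr
      exact indep p q r x y z (h.perm (by simp) (by simp)) hpq hpr hqr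
    have hr := h.exists_adj hT r (by simp)
    simp only [List.mem_cons, List.not_mem_nil, or_false, exists_eq_or_imp, exists_eq_left] at hr
    rcases hr with hr | hr | hr | hr | hr | hr
    · exact common x y p q r h hxy hzx hzy hzp hzq hzr hqr hpr hr
    · exact common y x p q r (h.perm (by simp) (by simp)) hxy.symm hzy hzx hzp hzq hzr hqr hpr hr
    · exact hzr hr.symm
    · exact hpr hr.symm
    · exact hqr hr.symm
    · exact G.irrefl hr
  have one : ∀ p q r, IsStar G v [x, y, z, p, q, r] → G.Adj z p → False := by
    intro p q r h hzp
    have hqr := perfect x y z p q r h hzx hzy hxy hzp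
    by_cases hzq : G.Adj z q
    · exact two p q r h hzp hzq
    by_cases hzr : G.Adj z r
    · exact two p r q (h.perm (by simp) (by simp)) hzp hzr
    exact indep z q r x y p (h.perm (by simp) (by simp)) hzq hzr hqr
  have hz := h.exists_adj hT z (by simp)
  simp only [List.mem_cons, List.not_mem_nil, or_false, exists_eq_or_imp, exists_eq_left] at hz
  rcases hz with hz | hz | hz | hz | hz | hz
  · exact hzx hz
  · exact hzy hz
  · exact G.irrefl hz
  · exact one p q r h hz
  · exact one q p r (h.perm (by simp) (by simp)) hz
  · exact one r p q (h.perm (by simp) (by simp)) hz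

/-- The pairs `ab`, `cd`, `ef` are the only non-adjacent pairs among six vertices. -/
structure IsOctahedron (G : SimpleGraph V) (a b c d e f : V) : Prop where
  ab : ¬ G.Adj a b
  cd : ¬ G.Adj c d
  ef : ¬ G.Adj e f
  ac : G.Adj a c
  ad : G.Adj a d
  ae : G.Adj a e
  af : G.Adj a f
  bc : G.Adj b c
  bd : G.Adj b d
  be : G.Adj b e
  bf : G.Adj b f
  ce : G.Adj c e
  cf : G.Adj c f
  de : G.Adj d e
  df : G.Adj d f

/-- A vertex of degree six admits a reduction unless its neighbourhood is almost complete or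
an octahedron. -/
lemma IsStar.reducible_or_nearClique_six {G : SimpleGraph V} {v a b c d e f : V}
    (h : IsStar G v [a, b, c, d, e, f]) (hT : EdgesInTriangles G) :
    Reducible G ∨
    (∃ a b c d e f, IsStar G v [a, b, c, d, e, f] ∧ NearClique G [a, b, c, d, e, f]) ∨
    ∃ a b c d e f, IsStar G v [a, b, c, d, e, f] ∧ IsOctahedron G a b c d e f := by
  by_contra! ⟨hR, hN, hO⟩
  have other : ∀ a b c d e f, IsStar G v [a, b, c, d, e, f] → ¬ G.Adj a b → G.Adj a c := by
    intro a b c d e f h hab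
    by_contra hh
    exact hR ((h.perm (l' := [b, c, a, d, e, f]) (by simp) (by simp)).reducible_six_of_not_adj
      hT hab hh)
  by_cases hmiss : ∃ a b c d e f, IsStar G v [a, b, c, d, e, f] ∧ ¬ G.Adj a b
  · obtain ⟨a, b, c, d, e, f, h, hab⟩ := hmiss
    have all : ∀ c d e f, IsStar G v [a, b, c, d, e, f] → G.Adj a c ∧ G.Adj b c :=
      fun c d e f h => ⟨other a b c d e f h hab,
        other b a c d e f (h.perm (by simp) (by simp)) fun h => hab h.symm⟩
    have two : ∀ c d e f, IsStar G v [a, b, c, d, e, f] → G.Adj c d := by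
      intro c d e f h
      by_contra hcd
      obtain ⟨hac, hbc⟩ := all c d e f h
      obtain ⟨had, hbd⟩ := all d c e f (h.perm (by simp) (by simp))
      obtain ⟨hae, hbe⟩ := all e c d f (h.perm (by simp) (by simp))
      obtain ⟨haf, hbf⟩ := all f c d e (h.perm (by simp) (by simp))
      have hdc : ¬ G.Adj d c := fun h => hcd h.symm
      have hce := other c d e f a b (h.perm (by simp) (by simp)) hcd
      have hcf := other c d f e a b (h.perm (by simp) (by simp)) hcd
      have hde := other d c e f a b (h.perm (by simp) (by simp)) hdc
      have hdf := other d c f e a b (h.perm (by simp) (by simp)) hdc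
      by_cases hef : G.Adj e f
      · have hv := h.2
        refine hR (h.reducible [(1, 2), (3, 4)]
          [(1, 3), (1, 4), (1, 5), (2, 3), (2, 4), (2, 5), (3, 5), (4, 5), (5, 6), (0, 6)]
          [(0, 1, 3), (1, 4, 5), (2, 3, 5), (0, 2, 4), (0, 5, 6)] ?_ ?_ rfl)
        · simp [*]
        · simp [*]
      · exact hO a b c d e f h ⟨hab, hcd, hef, hac, had, hae, haf, hbc, hbd, hbe, hbf, hce, hcf,
          hde, hdf⟩
    refine hN a b c d e f h ⟨?_, ?_, ?_⟩
    · simp only [List.mem_cons, List.not_mem_nil, or_false, forall_eq_or_imp, forall_eq]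
      exact ⟨(all c d e f h).1, (all d c e f (h.perm (by simp) (by simp))).1,
        (all e c d f (h.perm (by simp) (by simp))).1, (all f c d e (h.perm (by simp) (by simp))).1⟩
    · simp only [List.mem_cons, List.not_mem_nil, or_false, forall_eq_or_imp, forall_eq]
      exact ⟨(all c d e f h).2, (all d c e f (h.perm (by simp) (by simp))).2,
        (all e c d f (h.perm (by simp) (by simp))).2, (all f c d e (h.perm (by simp) (by simp))).2⟩
    · simp only [List.pairwise_cons, List.mem_cons, List.not_mem_nil, or_false, forall_eq_or_imp,
        forall_eq, List.Pairwise.nil, and_true, IsEmpty.forall_iff, implies_true]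
      exact ⟨⟨two c d e f h, two c e d f (h.perm (by simp) (by simp)),
        two c f d e (h.perm (by simp) (by simp))⟩, ⟨two d e c f (h.perm (by simp) (by simp)),
        two d f c e (h.perm (by simp) (by simp))⟩, two e f c d (h.perm (by simp) (by simp))⟩
  · push Not at hmiss
    refine hN a b c d e f h ⟨?_, ?_, ?_⟩
    · simp only [List.mem_cons, List.not_mem_nil, or_false, forall_eq_or_imp, forall_eq]
      exact ⟨hmiss a c b d e f (h.perm (by simp) (by simp)),
        hmiss a d b c e f (h.perm (by simp) (by simp)),
        hmiss a e b c d f (h.perm (by simp) (by simp)),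
        hmiss a f b c d e (h.perm (by simp) (by simp))⟩
    · simp only [List.mem_cons, List.not_mem_nil, or_false, forall_eq_or_imp, forall_eq]
      exact ⟨hmiss b c a d e f (h.perm (by simp) (by simp)),
        hmiss b d a c e f (h.perm (by simp) (by simp)),
        hmiss b e a c d f (h.perm (by simp) (by simp)),
        hmiss b f a c d e (h.perm (by simp) (by simp))⟩
    · simp only [List.pairwise_cons, List.mem_cons, List.not_mem_nil, or_false, forall_eq_or_imp,
        forall_eq, List.Pairwise.nil, and_true, IsEmpty.forall_iff, implies_true]
      exact ⟨⟨hmiss c d a b e f (h.perm (by simp) (by simp)),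
        hmiss c e a b d f (h.perm (by simp) (by simp)),
        hmiss c f a b d e (h.perm (by simp) (by simp))⟩,
        ⟨hmiss d e a b c f (h.perm (by simp) (by simp)),
        hmiss d f a b c e (h.perm (by simp) (by simp))⟩,
        hmiss e f a b c d (h.perm (by simp) (by simp))⟩

/-! ### Tight vertices -/

/-- At most one pair of distinct vertices of `S` is non-adjacent. -/
def AlmostClique (G : SimpleGraph V) (S : Set V) : Prop :=
  ∃ x y, ∀ p ∈ S, ∀ q ∈ S, p ≠ q → ¬ G.Adj p q → (p = x ∧ q = y) ∨ (p = y ∧ q = x)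

lemma AlmostClique.mono {G : SimpleGraph V} {S T : Set V} (h : AlmostClique G T) (hST : S ⊆ T) :
    AlmostClique G S := by
  obtain ⟨x, y, h⟩ := h
  exact ⟨x, y, fun p hp q hq => h p (hST hp) q (hST hq)⟩

/-- If one pair is non-adjacent, then all other pairs are adjacent. -/
lemma AlmostClique.adj {G : SimpleGraph V} {S : Set V} (h : AlmostClique G S) {a b p q : V}
    (ha : a ∈ S) (hb : b ∈ S) (hab : a ≠ b) (hadj : ¬ G.Adj a b) (hp : p ∈ S) (hq : q ∈ S)
    (hpq : p ≠ q) (h1 : ¬ (p = a ∧ q = b)) (h2 : ¬ (p = b ∧ q = a)) : G.Adj p q := by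
  obtain ⟨x, y, h⟩ := h
  by_contra hh
  have e1 := h a ha b hb hab hadj
  have e2 := h p hp q hq hpq hh
  grind

lemma NearClique.almostClique {G : SimpleGraph V} {l : List V} (h : NearClique G l)
    (hl : 2 ≤ l.length) : AlmostClique G {x | x ∈ l} := by
  match l, hl, h with
  | a :: b :: t, _, ⟨h1, h2, h3⟩ =>
    refine ⟨a, b, fun p hp q hq hpq hadj => ?_⟩
    simp only [Set.mem_ofPred_eq, List.mem_cons] at hp hq
    have : Std.Symm G.Adj := ⟨fun _ _ h => h.symm⟩
    have h3' := fun (hp : p ∈ t) (hq : q ∈ t) => h3.forall hp hq hpq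
    have s1 := fun h : G.Adj q p => hadj h.symm
    grind

/-- The vertices of an almost complete list can be rearranged so that the first two entries are
the only pair which may be non-adjacent. -/
lemma AlmostClique.exists_perm {G : SimpleGraph V} {l : List V} (h : AlmostClique G {x | x ∈ l})
    (hl : l.Nodup) : ∃ l', l'.Perm l ∧ NearClique G l' := by
  classical
  by_cases hall : l.Pairwise G.Adj
  · refine ⟨l, List.Perm.refl _, ?_⟩
    match l, hall with
    | [], _ => trivial
    | [_], _ => trivial
    | a :: b :: t, hall =>
      simp only [List.pairwise_cons, List.mem_cons, forall_eq_or_imp] at hall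
      exact ⟨hall.1.2, hall.2.1, hall.2.2⟩
  · have hex : ∃ a ∈ l, ∃ b ∈ l, a ≠ b ∧ ¬ G.Adj a b := by
      by_contra! hcon
      exact hall (hl.imp_of_mem fun ha hb hab => hcon _ ha _ hb hab)
    obtain ⟨a, ha, b, hb, hab, hadj⟩ := hex
    have hbe : b ∈ l.erase a := (List.mem_erase_of_ne hab.symm).2 hb
    refine ⟨a :: b :: (l.erase a).erase b, ?_, ?_, ?_, ?_⟩
    · exact ((List.perm_cons_erase hbe).symm.cons a).trans (List.perm_cons_erase ha).symm
    all_goals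
      have hmem : ∀ x, x ∈ (l.erase a).erase b → x ∈ l ∧ x ≠ a ∧ x ≠ b := by
        intro x hx
        rw [(hl.erase a).mem_erase_iff, hl.mem_erase_iff] at hx
        exact ⟨hx.2.2, hx.2.1, hx.1⟩
    · intro x hx
      obtain ⟨h1, h2, h3⟩ := hmem x hx
      exact h.adj ha hb hab hadj ha h1 h2.symm (by tauto) (by tauto)
    · intro x hx
      obtain ⟨h1, h2, h3⟩ := hmem x hx
      exact h.adj ha hb hab hadj hb h1 h3.symm (by tauto) (by tauto)
    · refine ((hl.erase a).erase b).imp_of_mem fun {x y} hx hy hxy => ?_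
      obtain ⟨h1, h2, h3⟩ := hmem x hx
      obtain ⟨h4, h5, h6⟩ := hmem y hy
      exact h.adj ha hb hab hadj h1 h4 hxy (by tauto) (by tauto)

lemma IsOctahedron.swap {G : SimpleGraph V} {a b c d e f : V} (h : IsOctahedron G a b c d e f) :
    IsOctahedron G a b c d f e := by
  obtain ⟨h1, h2, h3, h4, h5, h6, h7, h8, h9, h10, h11, h12, h13, h14, h15⟩ := h
  exact ⟨h1, h2, fun h => h3 h.symm, h4, h5, h7, h6, h8, h9, h11, h10, h13, h12, h15, h14⟩

lemma IsOctahedron.rotate {G : SimpleGraph V} {a b c d e f : V} (h : IsOctahedron G a b c d e f) :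
    IsOctahedron G c d e f a b := by
  obtain ⟨h1, h2, h3, h4, h5, h6, h7, h8, h9, h10, h11, h12, h13, h14, h15⟩ := h
  exact ⟨h2, h3, h1, h12, h13, h4.symm, h8.symm, h14, h15, h5.symm, h9.symm, h6.symm, h10.symm,
    h7.symm, h11.symm⟩

/-- The possible neighbourhoods of a vertex of degree at most six that admits no reduction. -/
inductive IsTight (G : SimpleGraph V) (v : V) : Prop
  | five (l : List V) (h : IsStar G v l) (hlen : l.length = 5)
      (hl : AlmostClique G {x | G.Adj v x})
  | six (l : List V) (h : IsStar G v l) (hlen : l.length = 6)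
      (hl : AlmostClique G {x | G.Adj v x})
  | octahedron (a b c d e f : V) (h : IsStar G v [a, b, c, d, e, f])
      (ho : IsOctahedron G a b c d e f)

lemma IsStar.almostClique {G : SimpleGraph V} {v : V} {l : List V} (h : IsStar G v l)
    (hl : NearClique G l) (hlen : 2 ≤ l.length) : AlmostClique G {x | G.Adj v x} :=
  (hl.almostClique hlen).mono fun x hx => (h.2 x).1 hx

/-- A vertex of positive degree at most six admits a reduction or is tight. -/
lemma IsStar.reducible_or_isTight {G : SimpleGraph V} {v : V} {l : List V} (h : IsStar G v l)
    (hT : EdgesInTriangles G) (hne : l ≠ []) (hlen : l.length ≤ 6) :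
    Reducible G ∨ IsTight G v := by
  match l, h, hne, hlen with
  | [a], h, _, _ =>
    have ha := h.exists_adj hT a (by simp)
    simp at ha
  | [a, b], h, _, _ =>
    have ha := h.exists_adj hT a (by simp)
    simp only [List.mem_cons, List.not_mem_nil, or_false, exists_eq_or_imp, exists_eq_left,
      SimpleGraph.irrefl, false_or] at ha
    exact Or.inl (h.reducible_two ha)
  | [a, b, c], h, _, _ =>
    have ha := h.exists_adj hT a (by simp)
    simp only [List.mem_cons, List.not_mem_nil, or_false, exists_eq_or_imp, exists_eq_left,
      SimpleGraph.irrefl, false_or] at ha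
    rcases ha with ha | ha
    · exact Or.inl (h.reducible_three ha)
    · exact Or.inl ((h.perm (l' := [a, c, b]) (by simp) (by simp)).reducible_three ha)
  | [a, b, c, d], h, _, _ => exact Or.inl (h.reducible_four hT)
  | [a, b, c, d, e], h, _, _ =>
    refine (h.reducible_or_nearClique_five hT).imp_right ?_
    rintro ⟨a, b, c, d, e, h, hN⟩
    exact .five _ h rfl (h.almostClique hN (by simp))
  | [a, b, c, d, e, f], h, _, _ =>
    refine (h.reducible_or_nearClique_six hT).imp_right ?_
    rintro (⟨a, b, c, d, e, f, h, hN⟩ | ⟨a, b, c, d, e, f, h, hO⟩)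
    · exact .six _ h rfl (h.almostClique hN (by simp))
    · exact .octahedron a b c d e f h hO
  | _ :: _ :: _ :: _ :: _ :: _ :: _ :: _, _, _, hlen => simp at hlen; omega

/-! ### Pairs of tight vertices -/

/-- `v` and `w` are distinct non-adjacent vertices with common neighbours `C`, while `A` and `B`
are the other neighbours of `v` and of `w`. -/
structure IsPair (G : SimpleGraph V) (v w : V) (C A B : List V) : Prop where
  nodup : (v :: w :: (C ++ (A ++ B))).Nodup
  left : ∀ x, G.Adj v x ↔ x ∈ C ∨ x ∈ A
  right : ∀ x, G.Adj w x ↔ x ∈ C ∨ x ∈ B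

namespace IsPair

variable {G : SimpleGraph V} {v w : V} {C A B : List V}

lemma symm (h : IsPair G v w C A B) : IsPair G w v C B A := by
  refine ⟨?_, h.right, h.left⟩
  have hp : (v :: w :: (C ++ (A ++ B))).Perm (w :: v :: (C ++ (B ++ A))) :=
    (List.Perm.swap w v _).trans
      (((List.Perm.append_left C List.perm_append_comm).cons v).cons w)
  exact hp.nodup_iff.1 h.nodup

lemma perm (h : IsPair G v w C A B) {C' : List V} (hC : C'.Perm C) : IsPair G v w C' A B :=
  ⟨(((hC.append_right _).cons w).cons v).nodup_iff.2 h.nodup,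
    fun x => (h.left x).trans (or_congr_left hC.mem_iff.symm),
    fun x => (h.right x).trans (or_congr_left hC.mem_iff.symm)⟩

lemma not_adj (h : IsPair G v w C A B) : ¬ G.Adj v w := by
  have := h.nodup
  rw [h.left]
  simp at this
  tauto

lemma not_adj_left (h : IsPair G v w C A B) : ∀ x ∈ B, ¬ G.Adj v x := by
  intro x hx hv
  have := (List.nodup_cons.1 (List.nodup_cons.1 h.nodup).2).2
  rw [List.nodup_append', List.nodup_append', List.disjoint_append_right] at this
  rcases (h.left x).1 hv with hv | hv
  · exact this.2.2.2 hv hx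
  · exact this.2.1.2.2 hv hx

lemma not_adj_right (h : IsPair G v w C A B) : ∀ x ∈ A, ¬ G.Adj w x := h.symm.not_adj_left

lemma isStar (h : IsPair G v w C A B) : IsStar G v (C ++ A) := by
  refine ⟨h.nodup.sublist ?_, fun x => by rw [h.left x, List.mem_append]⟩
  refine List.Sublist.cons_cons _ (List.Sublist.cons _ ?_)
  rw [← List.append_assoc]
  exact List.sublist_append_left _ _

lemma nodup_common (h : IsPair G v w C A B) : C.Nodup :=
  (List.nodup_append'.1 (List.nodup_cons.1 h.isStar.1).2).1

lemma reducible_of_template (h : IsPair G v w C A B) (k : ℕ)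
    (hk : (w :: (C ++ (A ++ B))).length + 1 = k)
    (N X : List (ℕ × ℕ)) (Y : List (ℕ × ℕ × ℕ))
    (hN : ∀ p ∈ N, ¬ G.Adj ((v :: w :: (C ++ (A ++ B))).getD p.1 v)
      ((v :: w :: (C ++ (A ++ B))).getD p.2 v))
    (hY : ∀ t ∈ Y, G.Adj ((v :: w :: (C ++ (A ++ B))).getD t.1 v)
        ((v :: w :: (C ++ (A ++ B))).getD t.2.1 v) ∧
      G.Adj ((v :: w :: (C ++ (A ++ B))).getD t.1 v)
        ((v :: w :: (C ++ (A ++ B))).getD t.2.2 v) ∧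
      G.Adj ((v :: w :: (C ++ (A ++ B))).getD t.2.1 v)
        ((v :: w :: (C ++ (A ++ B))).getD t.2.2 v))
    (hcheck : templateCheck k 2 N X Y = true) : Reducible G := by
  subst hk
  refine _root_.reducible_of_template v (w :: (C ++ (A ++ B))) 2 N X Y h.nodup ?_ hN hY hcheck
  intro i hi x hx
  have hi' : i = 0 ∨ i = 1 := by omega
  rcases hi' with rfl | rfl
  · have := (h.left x).1 hx
    simp only [List.mem_cons, List.mem_append]
    tauto
  · have := (h.right x).1 hx
    simp only [List.mem_cons, List.mem_append]
    tauto

end IsPair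

lemma IsStar.length_eq {G : SimpleGraph V} {v : V} {l l' : List V} (h : IsStar G v l)
    (h' : IsStar G v l') : l.length = l'.length :=
  List.Perm.length_eq ((List.perm_ext_iff_of_nodup (List.nodup_cons.1 h.1).2
    (List.nodup_cons.1 h'.1).2).2 fun x => (h.2 x).symm.trans (h'.2 x))

/-- In an octahedral neighbourhood any vertex may be listed last. -/
lemma IsStar.exists_octahedron_last {G : SimpleGraph V} {v a b c d e f x : V}
    (h : IsStar G v [a, b, c, d, e, f]) (ho : IsOctahedron G a b c d e f) (hx : G.Adj v x) :
    ∃ a b c d e, IsStar G v [a, b, c, d, e, x] ∧ IsOctahedron G a b c d e x := by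
  have hx' := (h.2 x).1 hx
  simp only [List.mem_cons, List.not_mem_nil, or_false] at hx'
  rcases hx' with rfl | rfl | rfl | rfl | rfl | rfl
  · exact ⟨_, _, _, _, _, h.perm (by simp) (by simp), ho.rotate.swap⟩
  · exact ⟨_, _, _, _, _, h.perm (by simp) (by simp), ho.rotate⟩
  · exact ⟨_, _, _, _, _, h.perm (by simp) (by simp), ho.rotate.rotate.swap⟩
  · exact ⟨_, _, _, _, _, h.perm (by simp) (by simp), ho.rotate.rotate⟩
  · exact ⟨_, _, _, _, _, h.perm (by simp) (by simp), ho.swap⟩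
  · exact ⟨_, _, _, _, _, h, ho⟩

namespace IsPair

variable {G : SimpleGraph V} {v w : V} {C A B : List V}

lemma exists_nearClique (h : IsPair G v w C A B) (hv : AlmostClique G {x | G.Adj v x}) :
    ∃ C', C'.length = C.length ∧ IsPair G v w C' A B ∧ NearClique G C' := by
  obtain ⟨C', hp, hn⟩ := (hv.mono (S := {x | x ∈ C})
    fun x hx => (h.left x).2 (Or.inl hx)).exists_perm h.nodup_common
  exact ⟨C', hp.length_eq, h.perm hp, hn⟩

lemma reducible_five_zero_zero (h : IsPair G v w C [] []) (hC : C.length = 5)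
    (hv : AlmostClique G {x | G.Adj v x}) : Reducible G := by
  obtain ⟨C, hlen, h, hn⟩ := h.exists_nearClique hv
  match C, hlen.trans hC, h, hn with
  | [c1, c2, c3, c4, c5], _, h, hn =>
    have h0 := h.not_adj
    have h1 := h.left
    have h2 := h.right
    simp [NearClique] at hn
    refine h.reducible_of_template 7 rfl [(0, 1)]
      [(2, 3), (2, 4), (2, 5), (2, 6), (3, 4), (3, 5), (3, 6), (4, 5), (4, 6), (5, 6)]
      [(0, 4, 5), (1, 2, 4), (1, 3, 5), (2, 5, 6), (3, 4, 6)] ?_ ?_ (by decide +kernel)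
    · simp [*]
    · simp [*]

lemma reducible_four_one_one (h : IsPair G v w C A B) (hC : C.length = 4) (hA : A.length = 1)
    (hB : B.length = 1) (hv : AlmostClique G {x | G.Adj v x}) : Reducible G := by
  obtain ⟨C, hlen, h, hn⟩ := h.exists_nearClique hv
  match C, hlen.trans hC, A, hA, B, hB, h, hn with
  | [c1, c2, c3, c4], _, [a], _, [b], _, h, hn =>
    have h0 := h.not_adj
    have h1 := h.left
    have h2 := h.right
    have h3 := h.not_adj_left b (by simp)
    have h4 := h.not_adj_right a (by simp)
    simp [NearClique] at hn
    refine h.reducible_of_template 8 rfl [(0, 1), (1, 6), (0, 7)]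
      [(2, 3), (2, 4), (2, 5), (3, 4), (3, 5), (4, 5), (0, 6), (1, 7)]
      [(1, 2, 4), (0, 2, 5), (0, 3, 4), (1, 3, 5)] ?_ ?_ (by decide +kernel)
    · simp only [List.forall_mem_cons]
      exact ⟨h0, h4, h3, by simp⟩
    · simp [*]
end IsPair

namespace IsPair

variable {G : SimpleGraph V} {v w : V} {C A B : List V}

lemma reducible_five_zero_one (h : IsPair G v w C [] B) (hC : C.length = 5) (hB : B.length = 1)
    (hv : AlmostClique G {x | G.Adj v x}) : Reducible G := by
  obtain ⟨C, hlen, h, hn⟩ := h.exists_nearClique hv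
  match C, hlen.trans hC, B, hB, h, hn with
  | [c1, c2, c3, c4, c5], _, [b], _, h, hn =>
    have h0 := h.not_adj
    have h1 := h.left
    have h2 := h.right
    have h3 := h.not_adj_left b (by simp)
    simp [NearClique] at hn
    by_cases h12 : G.Adj c1 c2
    · refine h.reducible_of_template 8 rfl [(0, 1), (0, 7)]
        [(2, 3), (2, 4), (2, 5), (2, 6), (3, 4), (3, 5), (3, 6), (4, 5), (4, 6), (5, 6), (1, 7)]
        [(0, 2, 3), (0, 4, 5), (1, 2, 4), (1, 3, 5), (2, 5, 6), (3, 4, 6)] ?_ ?_ (by decide +kernel)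
      · simp only [List.forall_mem_cons]
        exact ⟨h0, h3, by simp⟩
      · simp [*]
    · refine h.reducible_of_template 8 rfl [(0, 1), (0, 7), (2, 3)]
        [(2, 5), (2, 6), (3, 5), (3, 6), (0, 4), (1, 4), (5, 6), (1, 7)]
        [(0, 2, 5), (1, 2, 6), (1, 3, 5), (0, 3, 6)] ?_ ?_ (by decide +kernel)
      · simp only [List.forall_mem_cons]
        exact ⟨h0, h3, h12, by simp⟩
      · simp [*]

lemma reducible_four_one_two (h : IsPair G v w C A B) (hC : C.length = 4) (hA : A.length = 1)
    (hB : B.length = 2) (hv : AlmostClique G {x | G.Adj v x}) (hw : IsTight G w) :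
    Reducible G := by
  obtain ⟨C, hlen, h, hn⟩ := h.exists_nearClique hv
  match C, hlen.trans hC, A, hA, B, hB, h, hn with
  | [c1, c2, c3, c4], _, [a], _, [b, c], _, h, hn =>
    have h0 := h.not_adj
    have h1 := h.left
    have h2 := h.right
    have h3 := h.not_adj_left b (by simp)
    have h4 := h.not_adj_left c (by simp)
    have h5 := h.not_adj_right a (by simp)
    have hcommon : ∀ x, G.Adj w x → x ≠ b → x ≠ c → G.Adj v x := by
      intro x hx hb hc
      have := (h2 x).1 hx
      simp [hb, hc] at this
      simp [h1, this]
    have hbw : G.Adj w b := by simp [h2]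
    have hcw : G.Adj w c := by simp [h2]
    simp [NearClique] at hn
    by_cases hbc : G.Adj b c
    · refine h.reducible_of_template 9 rfl [(0, 1), (1, 6), (0, 7), (0, 8)]
        [(2, 3), (2, 4), (2, 5), (3, 4), (3, 5), (4, 5), (0, 6), (7, 8), (1, 7), (1, 8)]
        [(1, 2, 4), (0, 2, 5), (0, 3, 4), (1, 3, 5), (1, 7, 8)] ?_ ?_ (by decide +kernel)
      · simp only [List.forall_mem_cons]
        exact ⟨h0, h5, h3, h4, by simp⟩
      · simp [*]
    · have hne := h.nodup
      simp only [List.cons_append, List.nil_append, List.nodup_cons, List.mem_cons,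
        List.not_mem_nil, or_false, not_or] at hne
      have hwa : AlmostClique G {x | G.Adj w x} := by
        cases hw with
        | five _ _ _ h => exact h
        | six _ _ _ h => exact h
        | octahedron p q r s t u hstar ho =>
          exfalso
          obtain ⟨p, q, r, s, t, hstar, ho⟩ := hstar.exists_octahedron_last ho hcw
          have hp : ∀ x ∈ [p, q, r, s], G.Adj v x := by
            intro x hx
            have hxc : G.Adj x c := by
              have := ho.af; have := ho.bf; have := ho.cf; have := ho.df
              simp only [List.mem_cons, List.not_mem_nil, or_false] at hx
              rcases hx with rfl | rfl | rfl | rfl <;> assumption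
            refine hcommon x ((hstar.2 x).2 ?_) ?_ hxc.ne
            · simp only [List.mem_cons, List.not_mem_nil, or_false] at hx ⊢
              tauto
            · rintro rfl
              exact hbc hxc
          refine ho.cd (hv.adj (hp p (by simp)) (hp q (by simp)) ?_ ho.ab (hp r (by simp))
            (hp s (by simp)) ?_ ?_ ?_)
          · rintro rfl
            have := hstar.1
            simp at this
          · rintro rfl
            have := hstar.1
            simp at this
          · rintro ⟨rfl, -⟩
            exact G.irrefl ho.ac
          · rintro ⟨rfl, -⟩
            exact G.irrefl ho.bc
      have hadj : ∀ x y, G.Adj w x → G.Adj w y → x ≠ y → y ≠ c → x ≠ c → G.Adj x y := by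
        intro x y hx hy hxy hyc hxc
        exact hwa.adj hbw hcw (by tauto) hbc hx hy hxy (by tauto) (by tauto)
      have e12 : G.Adj c1 c2 := hadj _ _ (by simp [h2]) (by simp [h2]) (by tauto) (by tauto)
        (by tauto)
      have e1b : G.Adj c1 b := hadj _ _ (by simp [h2]) (by simp [h2]) (by tauto) (by tauto)
        (by tauto)
      have e2b : G.Adj c2 b := hadj _ _ (by simp [h2]) (by simp [h2]) (by tauto) (by tauto)
        (by tauto)
      have e3b : G.Adj c3 b := hadj _ _ (by simp [h2]) (by simp [h2]) (by tauto) (by tauto)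
        (by tauto)
      have e4b : G.Adj c4 b := hadj _ _ (by simp [h2]) (by simp [h2]) (by tauto) (by tauto)
        (by tauto)
      refine h.reducible_of_template 9 rfl [(0, 1), (1, 6), (0, 7), (0, 8), (7, 8)]
        [(2, 3), (2, 4), (2, 5), (2, 7), (3, 4), (3, 5), (3, 7), (4, 5), (4, 7), (5, 7), (0, 6),
          (1, 8)]
        [(2, 3, 7), (1, 2, 4), (0, 2, 5), (0, 3, 4), (1, 3, 5), (4, 5, 7)] ?_ ?_ (by decide +kernel)
      · simp only [List.forall_mem_cons]
        exact ⟨h0, h5, h3, h4, hbc, by simp⟩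
      · clear hcommon hadj hwa hne hw hv
        simp [*]

lemma reducible_six_zero_zero (h : IsPair G v w C [] []) (hC : C.length = 6) (hv : IsTight G v) :
    Reducible G := by
  have key : ∀ c1 c2 c3 c4 c5 c6, IsPair G v w [c1, c2, c3, c4, c5, c6] [] [] →
      G.Adj c1 c4 → G.Adj c2 c5 → G.Adj c3 c6 → G.Adj c1 c6 → G.Adj c2 c3 → G.Adj c4 c5 →
      G.Adj c1 c3 → G.Adj c1 c5 → G.Adj c3 c5 → G.Adj c2 c4 → G.Adj c2 c6 → G.Adj c4 c6 →
      Reducible G := by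
    intro c1 c2 c3 c4 c5 c6 h _ _ _ _ _ _ _ _ _ _ _ _
    have h0 := h.not_adj
    have h1 := h.left
    have h2 := h.right
    refine h.reducible_of_template 8 rfl [(0, 1)]
      [(2, 3), (2, 4), (2, 5), (2, 6), (2, 7), (3, 4), (3, 5), (3, 6), (3, 7), (4, 5), (4, 6),
        (4, 7), (5, 6), (5, 7), (6, 7)]
      [(0, 2, 5), (0, 3, 6), (0, 4, 7), (1, 2, 7), (1, 3, 4), (1, 5, 6), (2, 4, 6), (3, 5, 7)]
      ?_ ?_ (by decide +kernel)
    · simp only [List.forall_mem_cons]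
      exact ⟨h0, by simp⟩
    · simp [*]
  have near : AlmostClique G {x | G.Adj v x} → Reducible G := by
    intro hv
    obtain ⟨C, hlen, h, hn⟩ := h.exists_nearClique hv
    match C, hlen.trans hC, h, hn with
    | [c1, c2, c3, c4, c5, c6], _, h, hn =>
      simp [NearClique] at hn
      exact key c1 c2 c3 c4 c5 c6 h (by tauto) (by tauto) (by tauto) (by tauto) (by tauto)
        (by tauto) (by tauto) (by tauto) (by tauto) (by tauto) (by tauto) (by tauto)
  cases hv with
  | five _ _ _ hl => exact near hl
  | six _ _ _ hl => exact near hl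
  | octahedron a b c d e f hs ho =>
    have hp : [a, b, c, d, e, f].Perm C := by
      refine (List.perm_ext_iff_of_nodup (List.nodup_cons.1 hs.1).2 h.nodup_common).2 fun x => ?_
      rw [← hs.2, h.left]
      simp
    exact key a b c d e f (h.perm hp) ho.ad ho.be ho.cf ho.af ho.bc ho.de ho.ac ho.ae ho.ce ho.bd
      ho.bf ho.df

lemma reducible_five_one_one (h : IsPair G v w C A B) (hC : C.length = 5) (hA : A.length = 1)
    (hB : B.length = 1) (hv : IsTight G v) : Reducible G := by
  obtain ⟨a, rfl⟩ := List.length_eq_one_iff.1 hA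
  obtain ⟨b, rfl⟩ := List.length_eq_one_iff.1 hB
  have near : AlmostClique G {x | G.Adj v x} → Reducible G := by
    intro hv
    obtain ⟨C, hlen, h, hn⟩ := h.exists_nearClique hv
    match C, hlen.trans hC, h, hn with
    | [c1, c2, c3, c4, c5], _, h, hn =>
      have h0 := h.not_adj
      have h1 := h.left
      have h2 := h.right
      have h3 := h.not_adj_left b (by simp)
      have h4 := h.not_adj_right a (by simp)
      simp [NearClique] at hn
      by_cases h12 : G.Adj c1 c2
      · refine h.reducible_of_template 9 rfl [(0, 1), (1, 7), (0, 8)]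
          [(2, 3), (2, 4), (2, 5), (2, 6), (3, 4), (3, 5), (3, 6), (4, 5), (4, 6), (5, 6), (0, 7),
            (1, 8)]
          [(0, 2, 3), (0, 4, 5), (1, 2, 4), (1, 3, 5), (2, 5, 6), (3, 4, 6)] ?_ ?_
          (by decide +kernel)
        · simp only [List.forall_mem_cons]
          exact ⟨h0, h4, h3, by simp⟩
        · simp [*]
      · have hne := h.nodup
        simp only [List.cons_append, List.nil_append, List.nodup_cons, List.mem_cons,
          List.not_mem_nil, or_false, not_or] at hne
        have h3a : G.Adj c3 a := hv.adj (a := c1) (b := c2) (by simp [h1]) (by simp [h1])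
          (by tauto) h12 (by simp [h1]) (by simp [h1]) (by tauto)
          (by rintro ⟨rfl, -⟩; simp at hne) (by rintro ⟨rfl, -⟩; simp at hne)
        clear hne
        refine h.reducible_of_template 9 rfl [(0, 1), (1, 7), (0, 8), (2, 3)]
          [(2, 5), (2, 6), (3, 5), (3, 6), (4, 7), (0, 4), (1, 4), (5, 6), (0, 7), (1, 8)]
          [(0, 2, 5), (1, 2, 6), (1, 3, 5), (0, 3, 6), (0, 4, 7)] ?_ ?_ (by decide +kernel)
        · simp only [List.forall_mem_cons]
          exact ⟨h0, h4, h3, h12, by simp⟩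
        · simp [*]
  cases hv with
  | five _ _ _ hl => exact near hl
  | six _ _ _ hl => exact near hl
  | octahedron p q r s t u hs ho =>
    obtain ⟨p, q, r, s, t, hs, ho⟩ := hs.exists_octahedron_last ho
      ((h.left a).2 (Or.inr (by simp)))
    have hp : [p, q, r, s, t].Perm C := by
      have hnd := (List.nodup_cons.1 h.isStar.1).2
      have hnd' := (List.nodup_cons.1 hs.1).2
      have : ([p, q, r, s, t] ++ [a]).Perm (C ++ [a]) :=
        (List.perm_ext_iff_of_nodup hnd' hnd).2 fun x => by
          rw [← h.isStar.2, hs.2]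
      exact (List.perm_append_right_iff _).1 this
    have h := h.perm hp
    have h0 := h.not_adj
    have h1 := h.left
    have h2 := h.right
    have h3 := h.not_adj_left b (by simp)
    have h4 := h.not_adj_right a (by simp)
    refine h.reducible_of_template 9 rfl [(0, 1), (1, 7), (0, 8), (2, 3), (4, 5)]
      [(2, 4), (2, 5), (3, 4), (3, 5), (0, 6), (1, 6), (0, 7), (1, 8)]
      [(0, 2, 4), (1, 2, 5), (1, 3, 4), (0, 3, 5)] ?_ ?_ (by decide +kernel)
    · simp only [List.forall_mem_cons]
      exact ⟨h0, h4, h3, ho.ab, ho.cd, by simp⟩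
    · simp [h1, h2, ho.ac, ho.ad, ho.bc, ho.bd]

end IsPair

lemma IsTight.length {G : SimpleGraph V} {v : V} {l : List V} (h : IsTight G v)
    (hl : IsStar G v l) :
    l.length = 5 ∧ AlmostClique G {x | G.Adj v x} ∨ l.length = 6 := by
  cases h with
  | five l' h' hlen ha => exact Or.inl ⟨(hl.length_eq h').trans hlen, ha⟩
  | six l' h' hlen _ => exact Or.inr ((hl.length_eq h').trans hlen)
  | octahedron a b c d e f hstar _ => exact Or.inr (hl.length_eq hstar)

/-- Two tight vertices with at most seven neighbours in total have a reduction, unless both have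
degree five and they share three neighbours. -/
lemma IsPair.reducible_or {G : SimpleGraph V} {v w : V} {C A B : List V} (h : IsPair G v w C A B)
    (hv : IsTight G v) (hw : IsTight G w) (hlen : C.length + A.length + B.length ≤ 7) :
    Reducible G ∨ C.length = 3 ∧ A.length = 2 ∧ B.length = 2 ∧
      AlmostClique G {x | G.Adj v x} ∧ AlmostClique G {x | G.Adj w x} := by
  have hl := hv.length h.isStar
  have hr := hw.length h.symm.isStar
  simp only [List.length_append] at hl hr
  rcases hl with ⟨hl, hva⟩ | hl <;> rcases hr with ⟨hr, hwa⟩ | hr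
  · have : A.length = 0 ∨ A.length = 1 ∨ A.length = 2 := by omega
    rcases this with hA | hA | hA
    · obtain rfl := List.length_eq_zero_iff.1 hA
      obtain rfl := List.length_eq_zero_iff.1 (by omega : B.length = 0)
      exact Or.inl (h.reducible_five_zero_zero (by omega) hva)
    · exact Or.inl (h.reducible_four_one_one (by omega) hA (by omega) hva)
    · exact Or.inr ⟨by omega, hA, by omega, hva, hwa⟩
  · have : A.length = 0 ∨ A.length = 1 := by omega
    rcases this with hA | hA
    · obtain rfl := List.length_eq_zero_iff.1 hA
      exact Or.inl (h.reducible_five_zero_one (by omega) (by omega) hva)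
    · exact Or.inl (h.reducible_four_one_two (by omega) hA (by omega) hva hw)
  · have : B.length = 0 ∨ B.length = 1 := by omega
    rcases this with hB | hB
    · obtain rfl := List.length_eq_zero_iff.1 hB
      exact Or.inl (h.symm.reducible_five_zero_one (by omega) (by omega) hwa)
    · exact Or.inl (h.symm.reducible_four_one_two (by omega) hB (by omega) hwa hv)
  · have : A.length = 0 ∨ A.length = 1 := by omega
    rcases this with hA | hA
    · obtain rfl := List.length_eq_zero_iff.1 hA
      obtain rfl := List.length_eq_zero_iff.1 (by omega : B.length = 0)
      exact Or.inl (h.reducible_six_zero_zero (by omega) hv)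
    · exact Or.inl (h.reducible_five_one_one (by omega) hA (by omega) hv)

/-! ### A vertex with a unique earlier neighbour -/

/-- `v` and `u` are adjacent, `S` lists the other neighbours of `v`, and `D` lists the neighbours
of `u` which are neither `v` nor in `S`. -/
structure IsJoinedPair (G : SimpleGraph V) (v u : V) (S D : List V) : Prop where
  nodup : (v :: u :: (S ++ D)).Nodup
  left : ∀ x, G.Adj v x ↔ x = u ∨ x ∈ S
  right : ∀ x, G.Adj u x → x = v ∨ x ∈ S ∨ x ∈ D
  adj_right : ∀ x ∈ D, G.Adj u x

namespace IsJoinedPair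

variable {G : SimpleGraph V} {v u : V} {S D : List V}

lemma perm (h : IsJoinedPair G v u S D) {S' : List V} (hS : S'.Perm S) :
    IsJoinedPair G v u S' D :=
  ⟨(((hS.append_right _).cons u).cons v).nodup_iff.2 h.nodup,
    fun x => (h.left x).trans (or_congr_right hS.mem_iff.symm),
    fun x hx => by rw [hS.mem_iff]; exact h.right x hx, h.adj_right⟩

lemma perm_right (h : IsJoinedPair G v u S D) {D' : List V} (hD : D'.Perm D) :
    IsJoinedPair G v u S D' :=
  ⟨(((hD.append_left _).cons u).cons v).nodup_iff.2 h.nodup, h.left,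
    fun x hx => by rw [hD.mem_iff]; exact h.right x hx, fun x hx => h.adj_right x (hD.mem_iff.1 hx)⟩

lemma adj (h : IsJoinedPair G v u S D) : G.Adj v u := (h.left u).2 (Or.inl rfl)

lemma not_adj (h : IsJoinedPair G v u S D) : ∀ x ∈ D, ¬ G.Adj v x := by
  intro x hx hv
  have hn := List.nodup_cons.1 (List.nodup_cons.1 h.nodup).2
  rcases (h.left x).1 hv with rfl | hS
  · exact hn.1 (List.mem_append_right _ hx)
  · exact (List.nodup_append'.1 hn.2).2.2 hS hx

lemma isStar (h : IsJoinedPair G v u S D) : IsStar G v (u :: S) :=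
  ⟨h.nodup.sublist (((List.sublist_append_left S D).cons_cons u).cons_cons v), fun x => by
    rw [h.left x, List.mem_cons]⟩

lemma nodup_common (h : IsJoinedPair G v u S D) : S.Nodup :=
  (List.nodup_cons.1 (List.nodup_cons.1 h.isStar.1).2).2

lemma reducible_of_template (h : IsJoinedPair G v u S D) (k : ℕ)
    (hk : (u :: (S ++ D)).length + 1 = k) (N X : List (ℕ × ℕ)) (Y : List (ℕ × ℕ × ℕ))
    (hN : ∀ p ∈ N, ¬ G.Adj ((v :: u :: (S ++ D)).getD p.1 v) ((v :: u :: (S ++ D)).getD p.2 v))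
    (hY : ∀ t ∈ Y, G.Adj ((v :: u :: (S ++ D)).getD t.1 v) ((v :: u :: (S ++ D)).getD t.2.1 v) ∧
      G.Adj ((v :: u :: (S ++ D)).getD t.1 v) ((v :: u :: (S ++ D)).getD t.2.2 v) ∧
      G.Adj ((v :: u :: (S ++ D)).getD t.2.1 v) ((v :: u :: (S ++ D)).getD t.2.2 v))
    (hcheck : templateCheck k 2 N X Y = true) : Reducible G := by
  subst hk
  refine _root_.reducible_of_template v (u :: (S ++ D)) 2 N X Y h.nodup ?_ hN hY hcheck
  intro i hi x hx
  have hi' : i = 0 ∨ i = 1 := by omega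
  rcases hi' with rfl | rfl
  · have := (h.left x).1 hx
    simp only [List.mem_cons, List.mem_append]
    tauto
  · have := h.right x hx
    simp only [List.mem_cons, List.mem_append]
    tauto

/-- If the neighbourhood of `v` is almost complete, then either `u` is adjacent to all other
neighbours, or these form a clique and `u` is adjacent to all but one of them. -/
lemma exists_perm (h : IsJoinedPair G v u S D) (hv : AlmostClique G {x | G.Adj v x}) :
    ∃ S', S'.length = S.length ∧ IsJoinedPair G v u S' D ∧
      ((NearClique G S' ∧ ∀ x ∈ S', G.Adj u x) ∨
        ∃ s t, S' = s :: t ∧ ¬ G.Adj u s ∧ S'.Pairwise G.Adj ∧ ∀ x ∈ t, G.Adj u x) := by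
  classical
  have hmem : ∀ x ∈ S, G.Adj v x := fun x hx => (h.left x).2 (Or.inr hx)
  have hu : u ∉ S := (List.nodup_cons.1 (List.nodup_cons.1 h.isStar.1).2).1
  by_cases hex : ∃ s ∈ S, ¬ G.Adj u s
  · obtain ⟨s, hs, hus⟩ := hex
    have hp : (s :: S.erase s).Perm S := (List.perm_cons_erase hs).symm
    have h' := h.perm hp
    have hus' : u ≠ s := fun h => hu (h ▸ hs)
    refine ⟨s :: S.erase s, hp.length_eq, h', Or.inr ⟨s, _, rfl, hus, ?_, ?_⟩⟩
    · refine h'.nodup_common.imp_of_mem fun {x y} hx hy hxy => ?_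
      have hx' := hp.mem_iff.1 hx
      have hy' := hp.mem_iff.1 hy
      refine hv.adj h.adj (hmem s hs) hus' hus (hmem x hx') (hmem y hy') hxy ?_ ?_
      · rintro ⟨rfl, -⟩
        exact hu hx'
      · rintro ⟨-, rfl⟩
        exact hu hy'
    · intro x hx
      have hx' := h.nodup_common.mem_erase_iff.1 hx
      refine hv.adj h.adj (hmem s hs) hus' hus h.adj (hmem x hx'.2) ?_ ?_ ?_
      · rintro rfl
        exact hu hx'.2
      · rintro ⟨-, rfl⟩
        exact hx'.1 rfl
      · rintro ⟨rfl, -⟩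
        exact hus' rfl
  · push Not at hex
    obtain ⟨S', hp, hn⟩ := (hv.mono (S := {x | x ∈ S}) hmem).exists_perm h.nodup_common
    exact ⟨S', hp.length_eq, h.perm hp, Or.inl ⟨hn, fun x hx => hex x (hp.mem_iff.1 hx)⟩⟩

lemma reducible_four_of_clique {s₁ s₂ s₃ s₄ a b : V}
    (h : IsJoinedPair G v u [s₁, s₂, s₃, s₄] [a, b])
    (hS : [s₁, s₂, s₃, s₄].Pairwise G.Adj) (hu : ∀ x ∈ [s₁, s₂, s₃, s₄], G.Adj u x) :
    Reducible G := by
  have key : ∀ s₁ s₂ s₃ s₄ a b, IsJoinedPair G v u [s₁, s₂, s₃, s₄] [a, b] →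
      [s₁, s₂, s₃, s₄].Pairwise G.Adj → (∀ x ∈ [s₁, s₂, s₃, s₄], G.Adj u x) → G.Adj s₁ a →
      Reducible G := by
    intro s₁ s₂ s₃ s₄ a b h hS hu has
    have h1 := h.left
    have h2 := h.not_adj a (by simp)
    have h3 := h.not_adj b (by simp)
    have h4 := h.adj_right a (by simp)
    simp at hS hu
    refine h.reducible_of_template 8 rfl [(0, 6), (0, 7)] [(2, 3), (2, 4), (2, 5), (3, 4), (3, 5),
      (4, 5), (0, 1), (1, 6), (1, 7), (2, 6)]
      [(0, 1, 4), (1, 3, 5), (0, 2, 5), (2, 3, 4), (1, 2, 6)] ?_ ?_ (by decide +kernel)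
    · simp only [List.forall_mem_cons]
      exact ⟨h2, h3, by simp⟩
    · simp [*]
  by_cases hex : ∃ x ∈ [s₁, s₂, s₃, s₄], ∃ y ∈ [a, b], G.Adj x y
  · have first : ∀ a b, IsJoinedPair G v u [s₁, s₂, s₃, s₄] [a, b] →
        ∀ x ∈ [s₁, s₂, s₃, s₄], G.Adj x a → Reducible G := by
      classical
      intro a b h x hx hxa
      have hp := (List.perm_cons_erase hx).symm
      have hS' : (x :: [s₁, s₂, s₃, s₄].erase x).Pairwise G.Adj :=
        (hp.pairwise_iff (R := G.Adj) fun h => h.symm).2 hS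
      have hlen := hp.length_eq
      have h' := h.perm hp
      have hu' : ∀ y ∈ x :: [s₁, s₂, s₃, s₄].erase x, G.Adj u y :=
        fun y hy => hu y (hp.mem_iff.1 hy)
      generalize [s₁, s₂, s₃, s₄].erase x = t at h' hS' hu' hlen
      match t, hlen, h', hS', hu' with
      | [p, q, r], _, h', hS', hu' => exact key x p q r a b h' hS' hu' hxa
    obtain ⟨x, hx, y, hy, hxy⟩ := hex
    simp only [List.mem_cons, List.not_mem_nil, or_false] at hy
    rcases hy with rfl | rfl
    · exact first _ _ h x hx hxy
    · exact first _ _ (h.perm_right (List.Perm.swap _ _ _)) x hx hxy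
  · push Not at hex
    have h1 := h.left
    have h2 := h.not_adj a (by simp)
    have h3 := h.not_adj b (by simp)
    simp at hS hu hex
    refine h.reducible_of_template 8 rfl
      [(0, 6), (0, 7), (2, 6), (3, 6), (4, 6), (5, 6), (2, 7), (3, 7), (4, 7), (5, 7)]
      [(2, 3), (2, 4), (2, 5), (3, 4), (3, 5), (4, 5), (0, 1), (6, 7)]
      [(1, 2, 4), (0, 2, 5), (0, 3, 4), (1, 3, 5)] ?_ ?_ (by decide +kernel)
    · clear h1 hS hu
      simp only [List.forall_mem_cons]
      exact ⟨h2, h3, hex.1.1, hex.2.1.1, hex.2.2.1.1, hex.2.2.2.1, hex.1.2, hex.2.1.2, hex.2.2.1.2,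
        hex.2.2.2.2, by simp⟩
    · simp [*]

lemma reducible_four (h : IsJoinedPair G v u S D) (hT : EdgesInTriangles G)
    (hv : AlmostClique G {x | G.Adj v x}) (hS : S.length = 4) (hD : D.length ≤ 2) :
    Reducible G := by
  obtain ⟨S, hlen, h, ⟨hn, hu⟩ | ⟨s, t, rfl, hus, hn, hu⟩⟩ := h.exists_perm hv
  · match S, hlen.trans hS, h, hn, hu with
    | [s₁, s₂, s₃, s₄], _, h, hn, hu =>
      have h1 := h.left
      simp [NearClique] at hn
      have hu' := hu
      simp at hu
      match D, hD, h with
      | [], _, h =>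
        refine h.reducible_of_template 6 rfl []
          [(2, 3), (2, 4), (2, 5), (3, 4), (3, 5), (4, 5), (0, 1)]
          [(1, 2, 4), (0, 2, 5), (0, 3, 4), (1, 3, 5)] (by simp) ?_ (by decide +kernel)
        simp [*]
      | [a], _, h =>
        have h2 := h.not_adj a (by simp)
        refine h.reducible_of_template 7 rfl [(0, 6)]
          [(2, 3), (2, 4), (2, 5), (3, 4), (3, 5), (4, 5), (0, 1), (1, 6)]
          [(1, 2, 4), (0, 2, 5), (0, 3, 4), (1, 3, 5)] ?_ ?_ (by decide +kernel)
        · simp only [List.forall_mem_cons]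
          exact ⟨h2, by simp⟩
        · simp [*]
      | [a, b], _, h =>
        have h2 := h.not_adj a (by simp)
        have h3 := h.not_adj b (by simp)
        by_cases h12 : G.Adj s₁ s₂
        · exact h.reducible_four_of_clique (by simp [*]) hu'
        · refine h.reducible_of_template 8 rfl [(0, 6), (0, 7), (2, 3)]
            [(2, 4), (2, 5), (3, 4), (3, 5), (4, 5), (0, 1), (1, 6), (1, 7)]
            [(1, 2, 4), (0, 2, 5), (0, 3, 4), (1, 3, 5)] ?_ ?_ (by decide +kernel)
          · simp only [List.forall_mem_cons]
            exact ⟨h2, h3, h12, by simp⟩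
          · simp [*]
  · match t, hlen.trans hS, h, hn, hu with
    | [s₂, s₃, s₄], _, h, hn, hu =>
      have h1 := h.left
      simp at hn hu
      match D, hD, h with
      | [], _, h =>
        refine h.reducible_of_template 6 rfl []
          [(2, 3), (2, 4), (2, 5), (3, 4), (3, 5), (4, 5), (0, 1)]
          [(0, 1, 4), (1, 3, 5), (0, 2, 5), (2, 3, 4)] (by simp) ?_ (by decide +kernel)
        simp [*]
      | [a], _, h =>
        have h2 := h.not_adj a (by simp)
        refine h.reducible_of_template 7 rfl [(0, 6)]
          [(2, 3), (2, 4), (2, 5), (3, 4), (3, 5), (4, 5), (0, 1), (1, 6)]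
          [(0, 1, 4), (1, 3, 5), (0, 2, 5), (2, 3, 4)] ?_ ?_ (by decide +kernel)
        · simp only [List.forall_mem_cons]
          exact ⟨h2, by simp⟩
        · simp [*]
      | [a, b], _, h =>
        have hstar : IsStar G u [a, b, v, s₂, s₃, s₄] := by
          have hne := h.nodup
          refine ⟨by simp at hne ⊢; tauto, fun x => ⟨fun hx => ?_, fun hx => ?_⟩⟩
          · have h3 := h.right x hx
            have h4 : x ≠ s := fun h => hus (h ▸ hx)
            simp at h3 ⊢
            tauto
          · have h3 := h.adj_right a (by simp)
            have h4 := h.adj_right b (by simp)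
            have h5 := h.adj.symm
            simp only [List.mem_cons, List.not_mem_nil, or_false] at hx
            rcases hx with rfl | rfl | rfl | rfl | rfl | rfl
            exacts [h3, h4, h5, hu.1, hu.2.1, hu.2.2]
        exact hstar.reducible_six_of_not_adj hT (h.not_adj a (by simp)) (h.not_adj b (by simp))

lemma reducible_five (h : IsJoinedPair G v u S D) (hv : IsTight G v) (hS : S.length = 5)
    (hD : D.length ≤ 1) : Reducible G := by
  have near : AlmostClique G {x | G.Adj v x} → Reducible G := by
    intro hv
    obtain ⟨S, hlen, h, ⟨hn, hu⟩ | ⟨s, t, rfl, hus, hn, hu⟩⟩ := h.exists_perm hv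
    · match S, hlen.trans hS, h, hn, hu with
      | [s₁, s₂, s₃, s₄, s₅], _, h, hn, hu =>
        have h1 := h.left
        simp [NearClique] at hn
        simp at hu
        match D, hD, h with
        | [], _, h =>
          refine h.reducible_of_template 7 rfl [] [(2, 3), (2, 4), (2, 5), (2, 6), (3, 4), (3, 5),
            (3, 6), (4, 5), (4, 6), (5, 6), (0, 1)] [(1, 2, 4), (0, 2, 5), (0, 3, 4), (1, 3, 5),
            (4, 5, 6), (0, 1, 6)] (by simp) ?_ (by decide +kernel)
          simp [*]
        | [a], _, h =>
          have h2 := h.not_adj a (by simp)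
          refine h.reducible_of_template 8 rfl [(0, 7)] [(2, 3), (2, 4), (2, 5), (2, 6), (3, 4),
            (3, 5), (3, 6), (4, 5), (4, 6), (5, 6), (0, 1), (1, 7)] [(1, 2, 4), (0, 2, 5),
            (0, 3, 4), (1, 3, 5), (4, 5, 6), (0, 1, 6)] ?_ ?_ (by decide +kernel)
          · simp only [List.forall_mem_cons]
            exact ⟨h2, by simp⟩
          · simp [*]
    · match t, hlen.trans hS, h, hn, hu with
      | [s₂, s₃, s₄, s₅], _, h, hn, hu =>
        have h1 := h.left
        simp at hn hu
        match D, hD, h with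
        | [], _, h =>
          refine h.reducible_of_template 7 rfl [] [(2, 3), (2, 4), (2, 5), (2, 6), (3, 4), (3, 5),
            (3, 6), (4, 5), (4, 6), (5, 6), (0, 1)] [(1, 3, 4), (1, 5, 6), (0, 3, 5), (0, 4, 6),
            (2, 3, 6), (2, 4, 5)] (by simp) ?_ (by decide +kernel)
          simp [*]
        | [a], _, h =>
          have h2 := h.not_adj a (by simp)
          refine h.reducible_of_template 8 rfl [(0, 7)] [(2, 3), (2, 4), (2, 5), (2, 6), (3, 4),
            (3, 5), (3, 6), (4, 5), (4, 6), (5, 6), (0, 1), (1, 7)] [(1, 3, 4), (1, 5, 6),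
            (0, 3, 5), (0, 4, 6), (2, 3, 6), (2, 4, 5)] ?_ ?_ (by decide +kernel)
          · simp only [List.forall_mem_cons]
            exact ⟨h2, by simp⟩
          · simp [*]
  cases hv with
  | five _ _ _ hl => exact near hl
  | six _ _ _ hl => exact near hl
  | octahedron p q r s t f hs ho =>
    obtain ⟨p, q, r, s, t, hs, ho⟩ := hs.exists_octahedron_last ho h.adj
    have hp : [p, q, r, s, t].Perm S := by
      have : (u :: [p, q, r, s, t]).Perm (u :: S) :=
        (List.perm_append_comm (l₁ := [u])).trans
          ((List.perm_ext_iff_of_nodup (List.nodup_cons.1 hs.1).2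
            (List.nodup_cons.1 h.isStar.1).2).2 fun x => by rw [← h.isStar.2, hs.2])
      exact (List.perm_cons _).1 this
    have h := h.perm hp
    have h1 := h.left
    have hur : G.Adj u r := ho.cf.symm
    have hup : G.Adj u p := ho.af.symm
    have hus : G.Adj u s := ho.df.symm
    have hut : ¬ G.Adj u t := fun h => ho.ef h.symm
    obtain ⟨hpq, hrs, -, -, hps, hpt, -, -, hqs, -⟩ := ho
    match D, hD, h with
    | [], _, h =>
      refine h.reducible_of_template 7 rfl [(2, 3), (4, 5), (1, 6)]
        [(2, 5), (2, 6), (3, 5), (1, 4), (0, 4), (0, 6), (0, 1)]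
        [(1, 2, 5), (0, 2, 6), (0, 3, 5), (0, 1, 4)] ?_ ?_ (by decide +kernel)
      · simp only [List.forall_mem_cons]
        exact ⟨hpq, hrs, hut, by simp⟩
      · simp [*]
    | [a], _, h =>
      have h2 := h.not_adj a (by simp)
      refine h.reducible_of_template 8 rfl [(0, 7), (2, 3), (4, 5), (1, 6)]
        [(2, 5), (2, 6), (3, 5), (1, 4), (0, 4), (0, 6), (0, 1), (1, 7)]
        [(1, 2, 5), (0, 2, 6), (0, 3, 5), (0, 1, 4)] ?_ ?_ (by decide +kernel)
      · simp only [List.forall_mem_cons]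
        exact ⟨h2, hpq, hrs, hut, by simp⟩
      · simp [*]

/-- A tight vertex `v` with a neighbour `u` such that they have few neighbours in total admits
a reduction. -/
lemma reducible (h : IsJoinedPair G v u S D) (hT : EdgesInTriangles G) (hv : IsTight G v)
    (hlen : S.length + D.length ≤ 6) : Reducible G := by
  rcases hv.length h.isStar with ⟨hl, ha⟩ | hl
  · rw [List.length_cons] at hl
    exact h.reducible_four hT ha (by omega) (by omega)
  · rw [List.length_cons] at hl
    exact h.reducible_five hv (by omega) (by omega)

end IsJoinedPair

/-! ### Reductions which depend on the missing pairs of two neighbourhoods -/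

/-- The pairs of labels from `q` in increasing order, together with the trivial pair `(0, 0)`. -/
def pairsOf (q : List ℕ) : List (ℕ × ℕ) :=
  (0, 0) :: q.flatMap fun i => (q.filter fun j => Nat.blt i j).map fun j => (i, j)

lemma mem_pairsOf {q : List ℕ} {m : ℕ × ℕ} :
    m ∈ pairsOf q ↔ m = (0, 0) ∨ m.1 ∈ q ∧ m.2 ∈ q ∧ m.1 < m.2 := by
  obtain ⟨i, j⟩ := m
  simp [pairsOf]

/-- The labels of an almost complete set have at most one missing pair. -/
lemma AlmostClique.exists_pair {G : SimpleGraph V} {φ : ℕ → V} {q : List ℕ}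
    (h : AlmostClique G {x | ∃ i ∈ q, φ i = x}) (hφ : ∀ i ∈ q, ∀ j ∈ q, φ i = φ j → i = j) :
    ∃ m ∈ pairsOf q, ¬ G.Adj (φ m.1) (φ m.2) ∧
      ∀ i ∈ q, ∀ j ∈ q, i ≠ j → hasPair [m] i j = false → G.Adj (φ i) (φ j) := by
  by_cases hall : ∀ i ∈ q, ∀ j ∈ q, i < j → G.Adj (φ i) (φ j)
  · refine ⟨(0, 0), mem_pairsOf.2 (Or.inl rfl), G.irrefl, fun i hi j hj hij _ => ?_⟩
    rcases Nat.lt_or_gt_of_ne hij with hlt | hlt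
    · exact hall i hi j hj hlt
    · exact (hall j hj i hi hlt).symm
  · push Not at hall
    obtain ⟨a, ha, b, hb, hab, hadj⟩ := hall
    refine ⟨(a, b), mem_pairsOf.2 (Or.inr ⟨ha, hb, hab⟩), hadj, fun i hi j hj hij hm => ?_⟩
    simp only [hasPair, Bool.or_eq_false_iff, List.contains_eq_mem, List.mem_singleton,
      decide_eq_false_iff_not, Prod.mk.injEq] at hm
    refine h.adj ⟨a, ha, rfl⟩ ⟨b, hb, rfl⟩ (fun h => hab.ne (hφ a ha b hb h)) hadj ⟨i, hi, rfl⟩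
      ⟨j, hj, rfl⟩ (fun h => hij (hφ i hi j hj h)) ?_ ?_
    · rintro ⟨h1, h2⟩
      exact hm.1 ⟨hφ i hi a ha h1, hφ j hj b hb h2⟩
    · rintro ⟨h1, h2⟩
      exact hm.2 ⟨hφ j hj a ha h2, hφ i hi b hb h1⟩

/-- The labels `i` and `j` are adjacent by the list `S`, or since they are in one of the almost
complete sets `q₁` and `q₂` with missing pairs `m₁` and `m₂`. -/
def knownPair (S : List (ℕ × ℕ)) (q₁ q₂ : List ℕ) (m₁ m₂ : ℕ × ℕ) (i j : ℕ) : Bool :=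
  hasPair S i j || !(i == j) && (q₁.contains i && q₁.contains j && !hasPair [m₁] i j ||
    q₂.contains i && q₂.contains j && !hasPair [m₂] i j)

/-- Whatever the missing pairs of `q₁` and `q₂` are, one of the certificates in `L` is valid. -/
def coveringCheck (k n : ℕ) (N S : List (ℕ × ℕ)) (q₁ q₂ : List ℕ)
    (L : List (List (ℕ × ℕ) × List (ℕ × ℕ × ℕ))) : Bool :=
  (q₁ ++ q₂).all (fun i => Nat.blt i k) &&
  (pairsOf q₁).all fun m₁ => (pairsOf q₂).all fun m₂ =>
    !(m₁ == m₂) && (Nat.blt m₁.1 m₁.2 && q₂.contains m₁.1 && q₂.contains m₁.2 ||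
      Nat.blt m₂.1 m₂.2 && q₁.contains m₂.1 && q₁.contains m₂.2) ||
    L.any fun t => t.2.all (fun s => knownPair S q₁ q₂ m₁ m₂ s.1 s.2.1 &&
      knownPair S q₁ q₂ m₁ m₂ s.1 s.2.2 && knownPair S q₁ q₂ m₁ m₂ s.2.1 s.2.2) &&
      templateCheck k n (m₁ :: m₂ :: N) t.1 t.2

lemma reducible_of_coveringCheck {G : SimpleGraph V} (v : V) (l : List V) (n : ℕ)
    (N S : List (ℕ × ℕ)) (q₁ q₂ : List ℕ) (L : List (List (ℕ × ℕ) × List (ℕ × ℕ × ℕ)))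
    (hl : (v :: l).Nodup)
    (hpriv : ∀ i < n, ∀ x, G.Adj ((v :: l).getD i v) x → x ∈ v :: l)
    (hN : ∀ p ∈ N, ¬ G.Adj ((v :: l).getD p.1 v) ((v :: l).getD p.2 v))
    (hS : ∀ p ∈ S, G.Adj ((v :: l).getD p.1 v) ((v :: l).getD p.2 v))
    (h₁ : AlmostClique G {x | ∃ i ∈ q₁, (v :: l).getD i v = x})
    (h₂ : AlmostClique G {x | ∃ i ∈ q₂, (v :: l).getD i v = x})
    (hcheck : coveringCheck (l.length + 1) n N S q₁ q₂ L = true) : Reducible G := by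
  simp only [coveringCheck, Bool.and_eq_true, List.all_eq_true, Bool.or_eq_true, List.any_eq_true,
    Bool.not_eq_true', beq_eq_false_iff_ne, ne_eq, Nat.blt_eq, List.contains_iff_mem,
    List.mem_append] at hcheck
  obtain ⟨hlt, hcheck⟩ := hcheck
  have hinj : ∀ i j, (i ∈ q₁ ∨ i ∈ q₂) → (j ∈ q₁ ∨ j ∈ q₂) →
      (v :: l).getD i v = (v :: l).getD j v → i = j := by
    intro i j hi hj h
    rw [List.getD_eq_getElem _ _ (by simpa using hlt i hi),
      List.getD_eq_getElem _ _ (by simpa using hlt j hj)] at h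
    exact (hl.getElem_inj_iff).1 h
  obtain ⟨m₁, hm₁, hadj₁, hall₁⟩ := h₁.exists_pair (φ := fun i => (v :: l).getD i v)
    fun i hi j hj => hinj i j (Or.inl hi) (Or.inl hj)
  obtain ⟨m₂, hm₂, hadj₂, hall₂⟩ := h₂.exists_pair (φ := fun i => (v :: l).getD i v)
    fun i hi j hj => hinj i j (Or.inr hi) (Or.inr hj)
  have eq_of_hasPair : ∀ {q q' : List ℕ} {m m' : ℕ × ℕ}, m ∈ pairsOf q → m' ∈ pairsOf q' →
      m.1 < m.2 → hasPair [m'] m.1 m.2 = true → m = m' := by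
    intro q q' m m' hm hm' hlt hp
    obtain ⟨a, b⟩ := m
    obtain ⟨c, d⟩ := m'
    rw [mem_pairsOf] at hm hm'
    simp [hasPair] at hp hm hm' hlt ⊢
    omega
  rcases hcheck m₁ hm₁ m₂ hm₂ with ⟨hne, h⟩ | ⟨t, -, hknown, ht⟩
  · exfalso
    rcases h with ⟨⟨hlt, hi⟩, hj⟩ | ⟨⟨hlt, hi⟩, hj⟩
    · refine hadj₁ (hall₂ _ hi _ hj hlt.ne ?_)
      by_contra hp
      exact hne (eq_of_hasPair hm₁ hm₂ hlt (by simpa using hp))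
    · refine hadj₂ (hall₁ _ hi _ hj hlt.ne ?_)
      by_contra hp
      exact hne (eq_of_hasPair hm₂ hm₁ hlt (by simpa using hp)).symm
  · have known : ∀ i j, knownPair S q₁ q₂ m₁ m₂ i j = true →
        G.Adj ((v :: l).getD i v) ((v :: l).getD j v) := by
      intro i j h
      simp only [knownPair, Bool.or_eq_true, Bool.and_eq_true, Bool.not_eq_true',
        beq_eq_false_iff_ne, List.contains_iff_mem] at h
      rcases h with h | ⟨hij, ⟨⟨hi, hj⟩, hm⟩ | ⟨⟨hi, hj⟩, hm⟩⟩
      · simp only [hasPair, Bool.or_eq_true, List.contains_iff_mem] at h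
        rcases h with h | h
        · exact hS _ h
        · exact (hS _ h).symm
      · exact hall₁ i hi j hj hij hm
      · exact hall₂ i hi j hj hij hm
    refine reducible_of_template v l n (m₁ :: m₂ :: N) t.1 t.2 hl hpriv ?_ ?_ ht
    · simp only [List.forall_mem_cons]
      exact ⟨hadj₁, hadj₂, hN⟩
    · intro s hs
      obtain ⟨⟨e1, e2⟩, e3⟩ := hknown s hs
      exact ⟨known _ _ e1, known _ _ e2, known _ _ e3⟩

/-- The symmetries of two overlapping neighbourhoods `{2, 3, 4, 5, 6}` of `0` and
`{2, 3, 4, 7, 8}` of `1` which fix `2`. -/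
def linkSymmetries : List (List ℕ) :=
  [[3, 4], [4, 3]].flatMap fun a => [[5, 6], [6, 5]].flatMap fun b =>
    [[7, 8], [8, 7]].flatMap fun c => [[0, 1, 2] ++ a ++ b ++ c, [1, 0, 2] ++ a ++ c ++ b]

/-- Apply the relabellings in `P` to the certificates in `L`. -/
def relabel (P : List (List ℕ)) (L : List (List (ℕ × ℕ) × List (ℕ × ℕ × ℕ))) :
    List (List (ℕ × ℕ) × List (ℕ × ℕ × ℕ)) :=
  L.flatMap fun t => P.map fun σ =>
    (t.1.map fun p => (σ.getD p.1 0, σ.getD p.2 0),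
      t.2.map fun s => (σ.getD s.1 0, σ.getD s.2.1 0, σ.getD s.2.2 0))

lemma coveringCheck_two :
    coveringCheck 9 3 [(0, 1), (0, 7), (0, 8), (1, 5), (1, 6)]
      [(0, 2), (0, 3), (0, 4), (0, 5), (0, 6), (1, 2), (1, 3), (1, 4), (1, 7), (1, 8)]
      [2, 3, 4, 5, 6] [2, 3, 4, 7, 8]
      (relabel linkSymmetries
        [([(3, 4), (3, 7), (3, 8), (3, 0), (4, 7), (4, 8), (4, 0), (5, 6), (5, 2), (6, 2), (7, 8),
            (2, 1)],
          [(3, 4, 0), (3, 7, 2), (3, 8, 1), (4, 7, 1), (4, 8, 2), (6, 2, 0)]),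
        ([(3, 4), (3, 7), (3, 8), (4, 7), (4, 8), (5, 2), (5, 0), (6, 2), (6, 0), (7, 8), (2, 0),
            (2, 1)],
          [(3, 4, 0), (3, 7, 8), (3, 2, 1), (4, 7, 1), (4, 8, 2), (6, 2, 0)]),
        ([(3, 4), (3, 5), (3, 6), (3, 8), (3, 1), (4, 5), (4, 6), (4, 7), (4, 1), (5, 6), (7, 8),
            (7, 2), (8, 2), (2, 0)],
          [(3, 4, 5), (3, 6, 0), (3, 8, 1), (4, 7, 1), (4, 2, 0), (5, 6, 2), (7, 8, 2)]),
        ([(3, 2), (3, 0), (4, 5), (4, 6), (4, 1), (5, 6), (7, 8), (7, 2), (8, 2), (2, 0)],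
          [(3, 2, 0), (4, 6, 0), (4, 2, 1), (5, 6, 2), (7, 8, 2)])]) = true := by
  decide +kernel

lemma coveringCheck_three :
    coveringCheck 10 4
      [(0, 1), (0, 2), (1, 2), (0, 4), (0, 5), (1, 8), (1, 9), (2, 6), (2, 7)]
      [(0, 3), (0, 6), (0, 7), (0, 8), (0, 9), (1, 3), (1, 4), (1, 5), (1, 6), (1, 7),
        (2, 3), (2, 4), (2, 5), (2, 8), (2, 9)]
      [3, 4, 5, 6, 7] [3, 4, 5, 8, 9]
      (relabel (linkSymmetries.map fun σ => 0 :: σ.map (· + 1))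
        [([(4, 5), (4, 9), (4, 3), (5, 9), (5, 3), (6, 3), (6, 1), (7, 1), (7, 0), (8, 3), (8, 2),
            (9, 3)],
          [(4, 5, 1), (4, 9, 2), (5, 9, 3), (6, 3, 1), (7, 3, 0), (8, 3, 2)]),
        ([(4, 9), (4, 1), (4, 2), (5, 6), (5, 7), (5, 8), (5, 3), (6, 7), (6, 3), (7, 3), (8, 3),
            (8, 0), (9, 2), (9, 0)],
          [(4, 9, 2), (4, 3, 1), (5, 6, 1), (5, 7, 3), (5, 8, 2), (6, 7, 0), (9, 3, 0)])]) =
      true := by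
  decide +kernel

/-! ### Several tight vertices sharing a neighbour -/

/-- Two tight vertices with a common neighbour `u` all of whose neighbours are known. -/
lemma IsPair.reducible_of_two {G : SimpleGraph V} {v w u a b c d e f : V}
    (h : IsPair G v w [u, a, b] [c, d] [e, f]) (hv : AlmostClique G {x | G.Adj v x})
    (hw : AlmostClique G {x | G.Adj w x})
    (hu : ∀ x, G.Adj u x → x ∈ [v, w, a, b, c, d, e, f]) : Reducible G := by
  have h1 := h.left
  have h2 := h.right
  refine reducible_of_coveringCheck v [w, u, a, b, c, d, e, f] 3 _ _ _ _ _ h.nodup ?_ ?_ ?_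
    (hv.mono ?_) (hw.mono ?_) coveringCheck_two
  · intro i hi x hx
    have hi' : i = 0 ∨ i = 1 ∨ i = 2 := by omega
    rcases hi' with rfl | rfl | rfl
    · have := (h1 x).1 hx
      simp at this ⊢
      tauto
    · have := (h2 x).1 hx
      simp at this ⊢
      tauto
    · have := hu x hx
      simp at this ⊢
      tauto
  · have h3 := h.not_adj
    have h4 := h.not_adj_left
    have h5 := h.not_adj_right
    simp only [List.forall_mem_cons] at h4 h5 ⊢
    exact ⟨h3, h4.1, h4.2.1, h5.1, h5.2.1, by simp⟩
  · simp [h1, h2]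
  · simp only [Set.subset_def, Set.mem_ofPred_eq, h1]
    simp [eq_comm, or_assoc]
  · simp only [Set.subset_def, Set.mem_ofPred_eq, h2]
    simp [eq_comm, or_assoc]

/-- Three tight vertices with a common neighbour `u` all of whose neighbours are known. -/
lemma IsPair.reducible_of_three {G : SimpleGraph V} {v w z u a b c d e f : V}
    (h : IsPair G v w [u, a, b] [c, d] [e, f]) (hv : AlmostClique G {x | G.Adj v x})
    (hw : AlmostClique G {x | G.Adj w x}) (hz : z ∉ [v, w, u, a, b, c, d, e, f])
    (hadj : ∀ x, G.Adj z x ↔ x ∈ [u, c, d, e, f])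
    (hu : ∀ x, G.Adj u x → x ∈ [z, v, w, a, b, c, d, e, f]) : Reducible G := by
  have h1 := h.left
  have h2 := h.right
  refine reducible_of_coveringCheck z [v, w, u, a, b, c, d, e, f] 4 _ _ _ _ _
    (List.nodup_cons.2 ⟨hz, h.nodup⟩) ?_ ?_ ?_ (hv.mono ?_) (hw.mono ?_) coveringCheck_three
  · intro i hi x hx
    have hi' : i = 0 ∨ i = 1 ∨ i = 2 ∨ i = 3 := by omega
    rcases hi' with rfl | rfl | rfl | rfl
    · have := (hadj x).1 hx
      simp at this ⊢
      tauto
    · have := (h1 x).1 hx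
      simp at this ⊢
      tauto
    · have := (h2 x).1 hx
      simp at this ⊢
      tauto
    · have := hu x hx
      simp at this ⊢
      tauto
  · have h3 := h.not_adj
    have h4 := h.not_adj_left
    have h5 := h.not_adj_right
    have hn := h.nodup
    simp only [List.forall_mem_cons] at h4 h5 ⊢
    refine ⟨?_, ?_, h3, ?_, ?_, h4.1, h4.2.1, h5.1, h5.2.1, by simp⟩ <;>
    · intro hh
      have := (hadj _).1 hh
      simp at this hn
      tauto
  · simp [h1, h2, hadj]
  · simp only [Set.subset_def, Set.mem_ofPred_eq, h1]
    simp [eq_comm, or_assoc]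
  · simp only [Set.subset_def, Set.mem_ofPred_eq, h2]
    simp [eq_comm, or_assoc]

/-- If the vertices in `W` share the neighbour `u`, and otherwise they and `u` only have
neighbours in a set of at most six vertices, then there is a reduction. -/
lemma reducible_of_common_neighbor {G : SimpleGraph V} (hT : EdgesInTriangles G) {u : V}
    {W R : Finset V} (hW : W.Nonempty) (hWR : Disjoint W R) (huR : u ∉ R)
    (hadj : ∀ v ∈ W, G.Adj v u) (hNW : ∀ v ∈ W, ∀ x, G.Adj v x → x = u ∨ x ∈ R)
    (hNu : ∀ x, G.Adj u x → x ∈ W ∨ x ∈ R) (hR : R.card ≤ 6)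
    (hcard : ∀ v ∈ W, ∀ s : Finset V, (∀ x ∈ s, G.Adj v x) → s.card ≤ 6) : Reducible G := by
  classical
  by_contra hred
  set S : V → Finset V := fun v => R.filter (G.Adj v) with hS
  have mem_S : ∀ v x, x ∈ S v ↔ x ∈ R ∧ G.Adj v x := fun v x => Finset.mem_filter
  have adj_iff : ∀ v ∈ W, ∀ x, G.Adj v x ↔ x = u ∨ x ∈ S v := by
    intro v hv x
    rw [mem_S]
    refine ⟨fun h => (hNW v hv x h).imp_right fun h' => ⟨h', h⟩, ?_⟩
    rintro (rfl | h)
    · exact hadj v hv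
    · exact h.2
  have hvR : ∀ v ∈ W, v ∉ R := fun v hv => Finset.disjoint_left.1 hWR hv
  have star : ∀ v ∈ W, IsStar G v (u :: (S v).toList) := by
    intro v hv
    refine ⟨?_, fun x => by rw [adj_iff v hv, List.mem_cons, Finset.mem_toList]⟩
    have h1 := hvR v hv
    have h2 := (hadj v hv).ne
    simp only [List.nodup_cons, List.mem_cons, Finset.mem_toList, mem_S, Finset.nodup_toList]
    tauto
  have tight : ∀ v ∈ W, IsTight G v := by
    intro v hv
    refine ((star v hv).reducible_or_isTight hT (by simp) ?_).resolve_left hred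
    rw [← List.toFinset_card_of_nodup (List.nodup_cons.1 (star v hv).1).2]
    exact hcard v hv _ fun x hx => by rwa [(star v hv).2, ← List.mem_toFinset]
  have pair : ∀ v ∈ W, ∀ w ∈ W, v ≠ w →
      IsPair G v w (u :: (S v ∩ S w).toList) (S v \ S w).toList (S w \ S v).toList ∧
      (S v ∩ S w).card = 2 ∧ (S v \ S w).card = 2 ∧ (S w \ S v).card = 2 ∧
      AlmostClique G {x | G.Adj v x} ∧ AlmostClique G {x | G.Adj w x} := by
    intro v hv w hw hvw
    have h : IsPair G v w (u :: (S v ∩ S w).toList) (S v \ S w).toList (S w \ S v).toList := by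
      refine ⟨?_, fun x => ?_, fun x => ?_⟩
      · have h1 := hvR v hv
        have h2 := hvR w hw
        have h3 := (hadj v hv).ne
        have h4 := (hadj w hw).ne
        simp only [List.cons_append, List.nodup_cons, List.mem_cons, List.mem_append,
          Finset.mem_toList, Finset.mem_inter, Finset.mem_sdiff, mem_S, List.nodup_append',
          Finset.nodup_toList, List.disjoint_left]
        grind
      · simp only [adj_iff v hv, List.mem_cons, Finset.mem_toList, Finset.mem_inter,
          Finset.mem_sdiff]
        tauto
      · simp only [adj_iff w hw, List.mem_cons, Finset.mem_toList, Finset.mem_inter,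
          Finset.mem_sdiff]
        tauto
    refine ⟨h, ?_⟩
    have hle : (S v ∪ S w).card ≤ 6 :=
      (Finset.card_le_card (Finset.union_subset (Finset.filter_subset _ _)
        (Finset.filter_subset _ _))).trans hR
    have h1 := Finset.card_union_add_card_inter (S v) (S w)
    have h2 := Finset.card_sdiff_add_card_inter (S v) (S w)
    have h3 := Finset.card_sdiff_add_card_inter (S w) (S v)
    rw [Finset.inter_comm] at h3
    obtain ⟨e1, e2, e3, e4⟩ := (h.reducible_or (tight v hv) (tight w hw) (by
      simp only [List.length_cons, Finset.length_toList]; omega)).resolve_left hred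
    simp only [List.length_cons, Finset.length_toList] at e1 e2 e3
    exact ⟨by omega, e2, e3, e4⟩
  obtain ⟨v, hv⟩ := hW
  by_cases hone : ∀ w ∈ W, w = v
  · have h : IsJoinedPair G v u (S v).toList ((R \ S v).filter (G.Adj u)).toList := by
      refine ⟨?_, fun x => by rw [adj_iff v hv, Finset.mem_toList], fun x hx => ?_, ?_⟩
      · have h1 := hvR v hv
        have h3 := (hadj v hv).ne
        simp only [List.nodup_cons, List.mem_cons, List.mem_append, Finset.mem_toList,
          Finset.mem_sdiff, Finset.mem_filter, mem_S, List.nodup_append', Finset.nodup_toList,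
          List.disjoint_left]
        grind
      · have := hNu x hx
        have := hone x
        simp only [Finset.mem_toList, Finset.mem_filter, Finset.mem_sdiff]
        tauto
      · simp
    refine hred (h.reducible hT (tight v hv) ?_)
    rw [Finset.length_toList, Finset.length_toList]
    have h1 := Finset.card_le_card (Finset.filter_subset (G.Adj u) (R \ S v))
    have h2 := Finset.card_sdiff_add_card_eq_card (Finset.filter_subset (G.Adj v) R)
    simp only [hS] at h1 ⊢
    omega
  push Not at hone
  obtain ⟨w, hw, hwv⟩ := hone
  obtain ⟨h, hC, hA, hB, hv', hw'⟩ := pair v hv w hw hwv.symm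
  have hRS : R = S v ∪ S w := by
    refine (Finset.eq_of_subset_of_card_le (Finset.union_subset (Finset.filter_subset _ _)
        (Finset.filter_subset _ _)) ?_).symm
    change R.card ≤ (S v ∪ S w).card
    have h1 := Finset.card_union_add_card_inter (S v) (S w)
    have h2 := Finset.card_sdiff_add_card_inter (S v) (S w)
    have h3 := Finset.card_sdiff_add_card_inter (S w) (S v)
    rw [Finset.inter_comm] at h3
    omega
  have third : ∀ z ∈ W, z ≠ v → z ≠ w → S z = (S v \ S w) ∪ (S w \ S v) := by
    intro z hz hzv hzw
    obtain ⟨-, h1, h2, -⟩ := pair z hz v hv hzv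
    obtain ⟨-, h3, h4, -⟩ := pair z hz w hw hzw
    have hzR : S z ⊆ S v ∪ S w := hRS ▸ Finset.filter_subset _ _
    have e1 : S z \ S v = S w \ S v := by
      refine Finset.eq_of_subset_of_card_le (fun x hx => ?_) (by omega)
      have := @hzR x
      simp only [Finset.mem_sdiff, Finset.mem_union] at hx this ⊢
      tauto
    have e2 : S z \ S w = S v \ S w := by
      refine Finset.eq_of_subset_of_card_le (fun x hx => ?_) (by omega)
      have := @hzR x
      simp only [Finset.mem_sdiff, Finset.mem_union] at hx this ⊢
      tauto
    refine (Finset.eq_of_subset_of_card_le ?_ ?_).symm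
    · rw [← e1, ← e2]
      exact Finset.union_subset Finset.sdiff_subset Finset.sdiff_subset
    · have h5 := Finset.card_sdiff_add_card_inter (S z) (S v)
      rw [Finset.card_union_of_disjoint]
      · omega
      · exact disjoint_sdiff_sdiff
  have hmemC : ∀ x, x ∈ S v ∩ S w ↔ x ∈ (S v ∩ S w).toList := fun x => Finset.mem_toList.symm
  have hmemA : ∀ x, x ∈ S v \ S w ↔ x ∈ (S v \ S w).toList := fun x => Finset.mem_toList.symm
  have hmemB : ∀ x, x ∈ S w \ S v ↔ x ∈ (S w \ S v).toList := fun x => Finset.mem_toList.symm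
  rw [← Finset.length_toList] at hC hA hB
  obtain ⟨a, b, hab⟩ := List.length_eq_two.1 hC
  obtain ⟨c, d, hcd⟩ := List.length_eq_two.1 hA
  obtain ⟨e, f, hef⟩ := List.length_eq_two.1 hB
  rw [hab, hcd, hef] at h
  rw [hab] at hmemC
  rw [hcd] at hmemA
  rw [hef] at hmemB
  have mem_R : ∀ x, x ∈ R ↔ x ∈ [a, b] ∨ x ∈ [c, d] ∨ x ∈ [e, f] := by
    intro x
    rw [hRS, ← hmemC, ← hmemA, ← hmemB]
    simp only [Finset.mem_union, Finset.mem_inter, Finset.mem_sdiff]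
    tauto
  by_cases htwo : ∃ z ∈ W, z ≠ v ∧ z ≠ w
  · obtain ⟨z, hz, hzv, hzw⟩ := htwo
    have hSz := third z hz hzv hzw
    refine hred (h.reducible_of_three (z := z) hv' hw' ?_ ?_ ?_)
    · have h1 := hvR z hz
      have h2 := (hadj z hz).ne
      rw [mem_R] at h1
      simp at h1 ⊢
      tauto
    · intro x
      rw [adj_iff z hz, hSz, Finset.mem_union, hmemA, hmemB]
      simp only [List.mem_cons, List.not_mem_nil, or_false]
      tauto
    · intro x hx
      have h1 : x ∈ W → x = z ∨ x = v ∨ x = w := by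
        intro hxW
        by_contra! hcon
        obtain ⟨-, -, h2, -⟩ := pair x hxW z hz hcon.1
        rw [hSz, ← third x hxW hcon.2.1 hcon.2.2, Finset.sdiff_self] at h2
        simp at h2
      have h2 := hNu x hx
      rw [mem_R] at h2
      simp only [List.mem_cons, List.not_mem_nil, or_false] at h2 ⊢
      tauto
  · push Not at htwo
    refine hred (h.reducible_of_two hv' hw' fun x hx => ?_)
    have h1 : x ∈ W → x = v ∨ x = w := fun hxW => or_iff_not_imp_left.2 (htwo x hxW)
    have h2 := hNu x hx
    rw [mem_R] at h2
    simp only [List.mem_cons, List.not_mem_nil, or_false] at h2 ⊢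
    tauto

/-! ### Perfect elimination orders of chordal graphs -/

lemma cycleGraph_adj_of_lt {m : ℕ} {i j : Fin m} (hij : i < j) :
    (cycleGraph m).Adj i j ↔ j.val = i.val + 1 ∨ i.val = 0 ∧ j.val + 1 = m := by
  rw [cycleGraph_adj', Fin.sub_val_of_le hij.le, Fin.coe_sub_iff_lt.2 hij]
  have := j.isLt
  have : i.val < j.val := hij
  omega

/-- A chordless path together with a vertex adjacent to its two ends only is an induced cycle. -/
lemma not_isChordal_of_path {G : SimpleGraph V} {g : ℕ → V} {n : ℕ} {b : V} (hn : 2 ≤ n)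
    (hg : ∀ i j, i < j → j ≤ n → g i ≠ g j ∧ (G.Adj (g i) (g j) ↔ j = i + 1))
    (hb : ∀ i ≤ n, g i ≠ b ∧ (G.Adj (g i) b ↔ i = 0 ∨ i = n)) : ¬ IsChordal G := by
  intro h
  have key : ∀ i j : Fin (n + 2), i < j →
      (if i.val ≤ n then g i else b) ≠ (if j.val ≤ n then g j else b) ∧
      (G.Adj (if i.val ≤ n then g i else b) (if j.val ≤ n then g j else b) ↔
        (cycleGraph (n + 2)).Adj i j) := by
    intro i j hij
    rw [cycleGraph_adj_of_lt hij]
    have h1 := j.isLt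
    have h2 : i.val < j.val := hij
    rw [if_pos (show i.val ≤ n by omega)]
    by_cases hj : j.val ≤ n
    · rw [if_pos hj]
      refine ⟨(hg i j h2 hj).1, (hg i j h2 hj).2.trans ?_⟩
      omega
    · rw [if_neg hj]
      refine ⟨(hb i (by omega)).1, (hb i (by omega)).2.trans ?_⟩
      omega
  refine (h (n + 2) (by omega)).false
    ⟨⟨fun i => if i.val ≤ n then g i else b, fun i j hij => ?_⟩, fun {i j} => ?_⟩
  · by_contra hne
    rcases lt_or_gt_of_ne hne with hlt | hlt
    · exact (key i j hlt).1 hij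
    · exact (key j i hlt).1 hij.symm
  · change G.Adj (if i.val ≤ n then g i else b) (if j.val ≤ n then g j else b) ↔ _
    rcases lt_trichotomy i j with hlt | rfl | hlt
    · exact (key i j hlt).2
    · simp
    · rw [G.adj_comm, (key j i hlt).2, SimpleGraph.adj_comm]

/-- Two vertices with neighbours in a connected set, which have a common neighbour without
neighbours in this set, are adjacent in a chordal graph. -/
lemma IsChordal.adj_of_connected {G : SimpleGraph V} (h : IsChordal G) {C : Set V}
    (hC : (G.induce C).Connected) {x y b c d : V} (hxy : x ≠ y) (hc : c ∈ C) (hxc : G.Adj x c)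
    (hd : d ∈ C) (hyd : G.Adj y d) (hbx : G.Adj b x) (hby : G.Adj b y)
    (hbC : b ∉ C) (hb : ∀ c ∈ C, ¬ G.Adj b c) : G.Adj x y := by
  by_contra hadj
  have hCx : (G.induce (C ∪ {c, x})).Connected :=
    induce_union_connected hC.preconnected
      (induce_pair_connected_of_adj hxc.symm).preconnected ⟨c, hc, by simp⟩
  have hCxy : (G.induce (C ∪ {c, x} ∪ {d, y})).Connected :=
    induce_union_connected hCx.preconnected
      (induce_pair_connected_of_adj hyd.symm).preconnected ⟨d, Or.inl hd, by simp⟩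
  set H := G.induce (C ∪ {c, x} ∪ {d, y})
  obtain ⟨p, hp, hlen⟩ := hCxy.exists_path_of_dist ⟨x, by simp⟩ ⟨y, by simp⟩
  have hmem : ∀ z : (C ∪ {c, x} ∪ {d, y} : Set V), z.1 ∈ C ∨ z.1 = x ∨ z.1 = y := by
    rintro ⟨z, hz⟩
    simp only [Set.mem_union, Set.mem_insert_iff, Set.mem_singleton_iff] at hz
    rcases hz with (hz | rfl | hz) | rfl | hz <;> tauto
  have hinj : ∀ i j, i < j → j ≤ p.length → p.getVert i ≠ p.getVert j := fun i j hij hj heq =>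
    hij.ne (hp.getVert_injOn (by simp; omega) (by simpa using hj) heq)
  have hstart : ∀ i, 0 < i → i ≤ p.length → (p.getVert i).1 ≠ x := by
    intro i hi hi' heq
    refine hinj 0 i hi hi' (Subtype.ext ?_)
    rw [p.getVert_zero, heq]
  have hend : ∀ i < p.length, (p.getVert i).1 ≠ y := by
    intro i hi heq
    refine hinj i p.length hi le_rfl (Subtype.ext ?_)
    rw [p.getVert_length, heq]
  have hpos : 2 ≤ p.length := by
    by_contra hlt
    have h0 : p.length = 0 ∨ p.length = 1 := by omega
    rcases h0 with h0 | h0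
    · have := p.getVert_length
      rw [h0, p.getVert_zero] at this
      exact hxy (congrArg Subtype.val this)
    · have h1 := p.adj_getVert_succ (i := 0) (by omega)
      have h2 := p.getVert_length
      rw [h0] at h2
      rw [zero_add, h2, p.getVert_zero] at h1
      exact hadj h1
  refine not_isChordal_of_path (g := fun i => (p.getVert i).1) (n := p.length) (b := b) hpos
    ?_ ?_ h
  · intro i j hij hj
    refine ⟨fun heq => hinj i j hij hj (Subtype.ext heq), fun hadj => ?_, ?_⟩
    · have hadj' : H.Adj (p.getVert i) (p.getVert j) := hadj
      have := dist_le ((p.take i).append (Walk.cons hadj' (p.drop j)))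
      rw [← hlen, Walk.length_append, Walk.length_cons, Walk.take_length, Walk.drop_length] at this
      omega
    · rintro rfl
      exact p.adj_getVert_succ (by omega)
  · intro i hi
    refine ⟨?_, ?_, ?_⟩
    · intro heq
      rcases hmem (p.getVert i) with hz | hz | hz
      · exact hbC (heq ▸ hz)
      · exact hbx.ne (heq.symm.trans hz)
      · exact hby.ne (heq.symm.trans hz)
    · intro hadj
      by_contra hne
      rcases hmem (p.getVert i) with hz | hz | hz
      · exact hb _ hz hadj.symm
      · exact hstart i (by omega) hi hz
      · exact hend i (by omega) hz
    · rintro (rfl | rfl)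
      · rw [p.getVert_zero]
        exact hbx.symm
      · rw [p.getVert_length]
        exact hby.symm

lemma IsChordal.exists_simplicial {G : SimpleGraph V} (h : IsChordal G) (s : Finset V)
    (hs : s.Nonempty) : ∃ v ∈ s, ∀ x ∈ s, ∀ y ∈ s, G.Adj v x → G.Adj v y → x ≠ y → G.Adj x y := by
  classical
  induction s using Finset.strongInduction with
  | H s ih =>
  by_cases hclique : ∀ x ∈ s, ∀ y ∈ s, x ≠ y → G.Adj x y
  · obtain ⟨v, hv⟩ := hs
    exact ⟨v, hv, fun x hx y hy _ _ => hclique x hx y hy⟩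
  push Not at hclique
  obtain ⟨a, ha, a', ha', haa', hadj⟩ := hclique
  set F : Finset (Finset V) := s.powerset.filter fun C =>
    (G.induce (C : Set V)).Connected ∧ ∃ b ∈ s, b ∉ C ∧ ∀ c ∈ C, ¬ G.Adj b c with hF
  have haF : {a} ∈ F := by
    rw [hF, Finset.mem_filter, Finset.mem_powerset, Finset.singleton_subset_iff]
    refine ⟨ha, ?_, a', ha', by simpa using haa'.symm, by simpa using fun h => hadj h.symm⟩
    rw [Finset.coe_singleton]
    have : Subsingleton ({a} : Set V) := Set.subsingleton_singleton.coe_sort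
    exact ⟨fun x y => Subsingleton.elim x y ▸ Reachable.refl _⟩
  obtain ⟨C, hCF, hmax⟩ := F.exists_max_image Finset.card ⟨_, haF⟩
  rw [hF, Finset.mem_filter, Finset.mem_powerset] at hCF
  obtain ⟨hCs, hconn, b₀, hb₀, hb₀C, hb₀'⟩ := hCF
  set B := s.filter fun b => b ∉ C ∧ ∀ c ∈ C, ¬ G.Adj b c with hB
  have mem_B : ∀ b, b ∈ B ↔ b ∈ s ∧ b ∉ C ∧ ∀ c ∈ C, ¬ G.Adj b c := fun b => Finset.mem_filter
  have hCne : C.Nonempty := by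
    obtain ⟨c, hc⟩ := hconn.nonempty
    exact ⟨c, hc⟩
  have hBs : B ⊂ s := by
    refine Finset.filter_ssubset.2 ?_
    obtain ⟨c, hc⟩ := hCne
    exact ⟨c, hCs hc, fun h => h.1 hc⟩
  have adj_B : ∀ x ∈ s, x ∉ C → (∃ c ∈ C, G.Adj x c) → ∀ b ∈ B, G.Adj b x := by
    rintro x hx hxC ⟨c, hc, hxc⟩ b hb
    rw [mem_B] at hb
    by_contra hbx
    have : insert x C ∈ F := by
      rw [hF, Finset.mem_filter, Finset.mem_powerset]
      refine ⟨Finset.insert_subset hx hCs, ?_, b, hb.1, ?_, ?_⟩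
      · have heq : ((insert x C : Finset V) : Set V) = (C : Set V) ∪ {c, x} := by
          ext z
          simp only [Finset.coe_insert, Set.mem_insert_iff, SetLike.mem_coe, Set.mem_union,
            Set.mem_singleton_iff]
          constructor
          · tauto
          · rintro (h | rfl | h) <;> tauto
        rw [heq]
        exact induce_union_connected hconn.preconnected
          (induce_pair_connected_of_adj hxc.symm).preconnected ⟨c, hc, by simp⟩
      · rw [Finset.mem_insert]
        rintro (rfl | hbC)
        · exact hb.2.2 c hc hxc
        · exact hb.2.1 hbC
      · intro z hz
        rcases Finset.mem_insert.1 hz with rfl | hz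
        · exact hbx
        · exact hb.2.2 z hz
    have := hmax _ this
    rw [Finset.card_insert_of_notMem hxC] at this
    omega
  obtain ⟨v, hv, hvB⟩ := ih B hBs ⟨b₀, (mem_B b₀).2 ⟨hb₀, hb₀C, hb₀'⟩⟩
  have hvmem := (mem_B v).1 hv
  have cases_adj : ∀ x ∈ s, G.Adj v x → x ∈ B ∨ x ∉ C ∧ ∃ c ∈ C, G.Adj x c := by
    intro x hx hvx
    rw [mem_B]
    by_contra! hcon
    have hxC : x ∉ C := fun hxC => hvmem.2.2 x hxC hvx
    obtain ⟨c, hc, hxc⟩ := hcon.1 hx hxC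
    exact hcon.2 hxC c hc hxc
  refine ⟨v, hvmem.1, fun x hx y hy hvx hvy hxy => ?_⟩
  rcases cases_adj x hx hvx with hxB | ⟨hxC, c, hc, hxc⟩
  · rcases cases_adj y hy hvy with hyB | ⟨hyC, d, hd, hyd⟩
    · exact hvB x hxB y hyB hvx hvy hxy
    · exact adj_B y hy hyC ⟨d, hd, hyd⟩ x hxB
  · rcases cases_adj y hy hvy with hyB | ⟨hyC, d, hd, hyd⟩
    · exact (adj_B x hx hxC ⟨c, hc, hxc⟩ y hyB).symm
    · exact h.adj_of_connected hconn hxy hc hxc hd hyd hvx hvy hvmem.2.1 hvmem.2.2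

/-- Chordal graphs have perfect elimination orders. -/
lemma IsChordal.exists_eliminationOrder [Fintype V] {G : SimpleGraph V} (h : IsChordal G) :
    ∃ f : V → ℕ, Function.Injective f ∧ ∀ v x y, G.Adj v x → G.Adj v y → f v < f x → f v < f y →
      x ≠ y → G.Adj x y := by
  classical
  suffices hs : ∀ s : Finset V, ∃ f : V → ℕ, Set.InjOn f s ∧ ∀ v ∈ s, ∀ x ∈ s, ∀ y ∈ s,
      G.Adj v x → G.Adj v y → f v < f x → f v < f y → x ≠ y → G.Adj x y by
    obtain ⟨f, hf, hf'⟩ := hs Finset.univ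
    exact ⟨f, fun x y => hf (by simp) (by simp), fun v x y =>
      hf' v (by simp) x (by simp) y (by simp)⟩
  intro s
  induction s using Finset.strongInduction with
  | H s ih =>
  rcases s.eq_empty_or_nonempty with rfl | hs
  · exact ⟨fun _ => 0, by simp, by simp⟩
  obtain ⟨v, hv, hsimp⟩ := h.exists_simplicial s hs
  obtain ⟨f, hf, hf'⟩ := ih _ (Finset.erase_ssubset hv)
  refine ⟨fun x => if x = v then 0 else f x + 1, ?_, ?_⟩
  · intro x hx y hy hxy
    simp only at hxy
    split_ifs at hxy with h1 h2 h2
    · rw [h1, h2]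
    · exact hf (by simpa [h1] using hx) (by simpa [h2] using hy) (by omega)
  · intro w hw x hx y hy hwx hwy hlx hly hxy
    by_cases hwv : w = v
    · subst hwv
      exact hsimp x hx y hy hwx hwy hxy
    · have hne : ∀ z, (if w = v then 0 else f w + 1) < (if z = v then 0 else f z + 1) →
          z ≠ v ∧ f w < f z := by
        intro z hz
        split_ifs at hz with hzv
        · exact absurd hz (Nat.not_lt_zero _)
        · exact ⟨hzv, by omega⟩
      exact hf' w (Finset.mem_erase.2 ⟨hwv, hw⟩) x (Finset.mem_erase.2 ⟨(hne x hlx).1, hx⟩)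
        y (Finset.mem_erase.2 ⟨(hne y hly).1, hy⟩) hwx hwy (hne x hlx).2 (hne y hly).2 hxy

/-! ### The main theorem -/

/-- A subgraph of a chordal `K₈`-free graph all of whose edges lie in triangles is reducible. -/
lemma reducible_of_eliminationOrder [Fintype V] {G H : SimpleGraph V} (hGH : G ≤ H)
    (hK8 : H.CliqueFree 8) {f : V → ℕ} (hf : Function.Injective f)
    (hclique : ∀ v x y, H.Adj v x → H.Adj v y → f v < f x → f v < f y → x ≠ y → H.Adj x y)
    (hT : EdgesInTriangles G) (hne : G ≠ ⊥) : Reducible G := by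
  classical
  have card_le : ∀ v, ∀ s : Finset V, (∀ x ∈ s, H.Adj v x ∧ f v < f x) → s.card ≤ 6 := by
    intro v s hs
    by_contra hlt
    have hv : v ∉ s := fun hv => (hs v hv).1.ne rfl
    refine hK8.mono (show 8 ≤ (insert v s).card by rw [Finset.card_insert_of_notMem hv]; omega)
      (insert v s) ⟨?_, rfl⟩
    rw [Finset.coe_insert, isClique_insert]
    exact ⟨fun x hx y hy hxy => hclique v x y (hs x hx).1 (hs y hy).1 (hs x hx).2 (hs y hy).2 hxy,
      fun x hx _ => (hs x hx).1⟩
  have hex : (Finset.univ.filter fun u => ∃ v, G.Adj u v ∧ f v < f u).Nonempty := by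
    obtain ⟨a, b, hab⟩ := ne_bot_iff_exists_adj.1 hne
    rcases lt_or_gt_of_ne (hf.ne hab.ne) with hlt | hlt
    · exact ⟨b, by simpa using ⟨a, hab.symm, hlt⟩⟩
    · exact ⟨a, by simpa using ⟨b, hab, hlt⟩⟩
  obtain ⟨u, hu, hmin⟩ := Finset.exists_min_image _ f hex
  simp only [Finset.mem_filter, Finset.mem_univ, true_and] at hu hmin
  have later : ∀ v, f v < f u → ∀ x, G.Adj v x → f v < f x := by
    intro v hv x hx
    rcases lt_or_gt_of_ne (hf.ne hx.ne) with hlt | hlt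
    · exact hlt
    · exact absurd (hmin v ⟨x, hx, hlt⟩) (by omega)
  refine reducible_of_common_neighbor hT (u := u)
    (W := Finset.univ.filter fun v => G.Adj u v ∧ f v < f u)
    (R := Finset.univ.filter fun x => H.Adj u x ∧ f u < f x) ?_ ?_ ?_ ?_ ?_ ?_ ?_ ?_
  · obtain ⟨v, hv⟩ := hu
    exact ⟨v, by simpa using hv⟩
  · rw [Finset.disjoint_filter]
    intro x _ h1 h2
    omega
  · simp
  · intro v hv
    exact (Finset.mem_filter.1 hv).2.1.symm
  · intro v hv x hx
    simp only [Finset.mem_filter, Finset.mem_univ, true_and] at hv ⊢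
    have hlt := later v hv.2 x hx
    refine or_iff_not_imp_left.2 fun hxu => ⟨?_, ?_⟩
    · exact hclique v u x (hGH hv.1.symm) (hGH hx) hv.2 hlt (Ne.symm hxu)
    · exact lt_of_le_of_ne (hmin x ⟨v, hx.symm, hlt⟩) (hf.ne (Ne.symm hxu))
  · intro x hx
    simp only [Finset.mem_filter, Finset.mem_univ, true_and]
    rcases lt_or_gt_of_ne (hf.ne hx.ne) with hlt | hlt
    · exact Or.inr ⟨hGH hx, hlt⟩
    · exact Or.inl ⟨hx, hlt⟩
  · exact card_le u _ fun x hx => (Finset.mem_filter.1 hx).2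
  · intro v hv s hs
    exact card_le v s fun x hx => ⟨hGH (hs x hx), later v (Finset.mem_filter.1 hv).2.2 x (hs x hx)⟩

lemma tuzaBound_of_isChordal [Fintype V] {H : SimpleGraph V} (hH : IsChordal H)
    (hK8 : H.CliqueFree 8) : TuzaBound H := by
  obtain ⟨f, hf, hclique⟩ := hH.exists_eliminationOrder
  suffices h : ∀ G : SimpleGraph V, G ≤ H → TuzaBound G from h H le_rfl
  intro G
  induction G using WellFoundedLT.induction with
  | ind G ih =>
  intro hGH
  have ih' : ∀ G' < G, TuzaBound G' := fun G' hG' => ih G' hG' (hG'.le.trans hGH)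
  by_cases hT : EdgesInTriangles G
  · rcases eq_or_ne G ⊥ with rfl | hne
    · refine ⟨∅, ∅, ⟨by simp, fun t ht => ?_⟩, ⟨by simp, by simp⟩, by simp⟩
      exact absurd ht (cliqueFree_bot (by norm_num) t)
    · exact (reducible_of_eliminationOrder hGH hK8 hf hclique hT hne).tuzaBound ih'
  · unfold EdgesInTriangles at hT
    push Not at hT
    obtain ⟨a, b, hab, hc⟩ := hT
    refine TuzaBound.of_deleteEdges_singleton hc (ih' _ (lt_of_le_of_ne (G.deleteEdges_le _) ?_))
    intro heq
    rw [← heq, deleteEdges_adj] at hab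
    exact hab.2 rfl

/-- If `G` is a `K₈`-free chordal graph, then `τ(G) ≤ 2·ν(G)`. -/
theorem tuza_of_chordal_K8_free (V : Type) [Fintype V] (G : SimpleGraph V)
    (hchordal : IsChordal G) (hK8 : G.CliqueFree 8) : tau G ≤ 2 * nu G :=
  (tuzaBound_of_isChordal hchordal hK8).tau_le
end
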